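/- arXiv:2202.06392 — 2 statements merged into one kernel-verified Lean document; each statement's English description precedes it below -/
import Mathlib

section
/- For every r > 0 there exists a constant C = C(r) > 0, independent of f, n and d, with the following property. Let d ≥ 3 be an integer, δ > 0, and f ∈ C(S^d) be such that ‖f‖_{d;r} := sup_{x ∈ S^d} [ ‖f‖_∞ + min_{P ∈ Π_r^d} max_{y ∈ B(x,δ)} |f(y)−P(y)|/|x−y|_{d+1}^r ] < ∞. Let n be an integer with n ≥ 2(d+1), dn ≥ (d+r+1)², and √(16 r (log n)/n) ≤ δ. Then E_{d;2(d+2)n}(f) ≤ C · d^{1/6} · dim(Π_{2(d+2)n}^d)^{−r/d} · ‖f‖_{d;r}. -/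
noncomputable section

open MeasureTheory Real Set
open scoped RealInnerProductSpace

/-- Value at `x` of the orthonormalized Jacobi polynomial `p_n^{(α,β)}`. -/
def jacobiP (α β : ℝ) (n : ℕ) (x : ℝ) : ℝ :=
  Real.sqrt ((2 * (n : ℝ) + α + β + 1) / 2 ^ (α + β + 1) *
      (Real.Gamma ((n : ℝ) + α + β + 1) * (n.factorial : ℝ) /
        (Real.Gamma ((n : ℝ) + α + 1) * Real.Gamma ((n : ℝ) + β + 1)))) *
    (Real.Gamma (α + n + 1) / ((n.factorial : ℝ) * Real.Gamma (α + β + n + 1))) *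
    ∑ m ∈ Finset.range (n + 1),
      (n.choose m : ℝ) * (Real.Gamma (α + β + n + m + 1) / Real.Gamma (α + m + 1)) *
        ((x - 1) / 2) ^ m

/-- The kernel `K_n^{(α,β)}(x) = Σ_{ℓ<n} p_ℓ^{(α,β)}(1) p_ℓ^{(α,β)}(x)`. -/
def jacobiK (α β : ℝ) (n : ℕ) (x : ℝ) : ℝ :=
  ∑ ℓ ∈ Finset.range n, jacobiP α β ℓ 1 * jacobiP α β ℓ x

/-- The unit sphere `S^d ⊂ ℝ^{d+1}`. -/
abbrev Sph (d : ℕ) := Metric.sphere (0 : EuclideanSpace ℝ (Fin (d + 1))) 1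

/-- The rotation invariant Riemannian volume probability measure `μ_d^*` on `S^d`. -/
def sphMeasure (d : ℕ) : Measure (Sph d) :=
  ((volume : Measure (EuclideanSpace ℝ (Fin (d + 1)))).toSphere Set.univ)⁻¹ •
    (volume : Measure (EuclideanSpace ℝ (Fin (d + 1)))).toSphere

/-- `f : S^d → ℝ` is the restriction to the sphere of an algebraic polynomial in `d+1`
variables of total degree `< n`, i.e. `f ∈ Π_n^d`. -/
def IsSphPoly (d : ℕ) (n : ℝ) (f : Sph d → ℝ) : Prop :=
  ∃ p : MvPolynomial (Fin (d + 1)) ℝ, (p.totalDegree : ℝ) < n ∧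
    ∀ y : Sph d, f y = MvPolynomial.eval (fun i => (y : EuclideanSpace ℝ (Fin (d + 1))) i) p

/-- Integral of `f` with respect to a signed measure (via the Jordan decomposition). -/
def sInt {X : Type*} [MeasurableSpace X] (ν : SignedMeasure X) (f : X → ℝ) : ℝ :=
  (∫ x, f x ∂ν.toJordanDecomposition.posPart) - ∫ x, f x ∂ν.toJordanDecomposition.negPart

/-- Integral of `f` over a set `s` with respect to a signed measure. -/
def sIntOn {X : Type*} [MeasurableSpace X] (ν : SignedMeasure X) (s : Set X) (f : X → ℝ) : ℝ :=
  (∫ x in s, f x ∂ν.toJordanDecomposition.posPart) -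
    ∫ x in s, f x ∂ν.toJordanDecomposition.negPart

/-- `ν` is a quadrature measure of order `n` on `S^d`. -/
def IsQuadrature (d : ℕ) (n : ℝ) (ν : SignedMeasure (Sph d)) : Prop :=
  ∀ f : Sph d → ℝ, IsSphPoly d n f → sInt ν f = ∫ y, f y ∂sphMeasure d

/-- `ν` satisfies the Marcinkiewicz-Zygmund inequality of order `n` with constant `c`;
`ν ∈ MZ(d;n)` means this holds for some `c`, and `|||ν|||_{d;n}` is the least such `c`. -/
def IsMZ (d : ℕ) (n : ℝ) (ν : SignedMeasure (Sph d)) (c : ℝ) : Prop :=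
  ∀ f : Sph d → ℝ, IsSphPoly d (n / 2) f →
    (∫ y, (f y) ^ 2 ∂ν.totalVariation) ≤ c * ∫ y, (f y) ^ 2 ∂sphMeasure d

/-- `ω_d`, the volume of `S^d`. -/
def omegaS (d : ℕ) : ℝ := 2 * Real.pi ^ (((d : ℝ) + 1) / 2) / Real.Gamma (((d : ℝ) + 1) / 2)

/-- The reproducing kernel `K_{d;n}` of `Π_n^d`. -/
def sphK (d n : ℕ) (x : ℝ) : ℝ :=
  (omegaS d / omegaS (d - 1)) * jacobiK ((d : ℝ) / 2 - 1) ((d : ℝ) / 2 - 1) n x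

/-- The kernel `Φ̃_{d;n,r}`. -/
def PhiTilde (d n : ℕ) (r : ℝ) (x : ℝ) : ℝ :=
  sphK d ((d + 2) * n) x *
    (jacobiP ((d : ℝ) / 2 + r) ((d : ℝ) / 2 - 2) (d * n) x /
      jacobiP ((d : ℝ) / 2 + r) ((d : ℝ) / 2 - 2) (d * n) 1)

/-- The kernel `Φ_{d;n,r}`. -/
def Phi (d n : ℕ) (r : ℝ) (x : ℝ) : ℝ := PhiTilde d n r x * ((1 + x) / 2) ^ n

/-- The inner product `x·y` of two points of `S^d`. -/
def ip {d : ℕ} (x y : Sph d) : ℝ :=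
  ⟪(x : EuclideanSpace ℝ (Fin (d + 1))), (y : EuclideanSpace ℝ (Fin (d + 1)))⟫

/-- The operator `σ_{d;n,r}(ν, f)`. -/
def sigmaOp (d n : ℕ) (r : ℝ) (ν : SignedMeasure (Sph d)) (f : Sph d → ℝ) (x : Sph d) : ℝ :=
  sInt ν (fun y => f y * Phi d n r (ip x y))

/-- The operator `σ̃_{d;n,r}(ν, f)`. -/
def sigmaTildeOp (d n : ℕ) (r : ℝ) (ν : SignedMeasure (Sph d)) (f : Sph d → ℝ) (x : Sph d) : ℝ :=
  sInt ν (fun y => f y * PhiTilde d n r (ip x y))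

/-- The uniform (supremum) norm `‖f‖_∞`. -/
def supNorm {X : Type*} (f : X → ℝ) : ℝ := sSup (Set.range fun x => |f x|)

/-- `E_{d;n}(f)`, the degree of approximation of `f` from `Π_n^d` in the uniform norm. -/
def bestApprox (d : ℕ) (n : ℝ) (f : Sph d → ℝ) : ℝ :=
  sInf {t | ∃ g, IsSphPoly d n g ∧ ∀ y, |f y - g y| ≤ t}

/-- `dim Π_n^d = (2n+d−2)·Γ(n+d−1)/(Γ(n)·Γ(d+1))` (for `n ≥ 2`). -/
def dimPi (d n : ℕ) : ℝ :=
  (2 * (n : ℝ) + d - 2) * Real.Gamma ((n : ℝ) + d - 1) /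
    (Real.Gamma n * Real.Gamma ((d : ℝ) + 1))

/-- Pochhammer symbol `a (a+1) ⋯ (a+n-1)`. -/
def poch (a : ℝ) (n : ℕ) : ℝ := ∏ i ∈ Finset.range n, (a + i)

lemma poch_zero (a : ℝ) : poch a 0 = 1 := by simp [poch]

lemma poch_succ (a : ℝ) (n : ℕ) : poch a (n + 1) = poch a n * (a + n) := by
  simp [poch, Finset.prod_range_succ]

lemma poch_add (a : ℝ) (m n : ℕ) : poch a (m + n) = poch a m * poch (a + m) n := by
  induction n with
  | zero => simp [poch_zero]
  | succ n ih =>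
    rw [← add_assoc, poch_succ, ih, poch_succ]
    push_cast
    ring

lemma poch_pos {a : ℝ} (ha : 0 < a) (n : ℕ) : 0 < poch a n := by
  unfold poch
  exact Finset.prod_pos fun i _ => by positivity

lemma poch_ge_pow {a : ℝ} (ha : 0 ≤ a) (n : ℕ) : a ^ n ≤ poch a n := by
  unfold poch
  calc a ^ n = ∏ _i ∈ Finset.range n, a := by simp
    _ ≤ _ := Finset.prod_le_prod (fun _ _ => ha) fun i _ => by
      have : (0 : ℝ) ≤ i := by positivity
      linarith

lemma poch_le_pow {a b : ℝ} (ha : 0 ≤ a) (n : ℕ) (h : a + n ≤ b + 1) : poch a n ≤ b ^ n := by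
  unfold poch
  calc _ ≤ ∏ _i ∈ Finset.range n, b := Finset.prod_le_prod (fun _ _ => by positivity) fun i hi => by
        have : (i : ℝ) + 1 ≤ n := by exact_mod_cast Finset.mem_range.1 hi
        linarith
    _ = _ := by simp

/-- Pochhammer polynomial in a shift variable. -/
def pochPoly (c : ℝ) (n : ℕ) : Polynomial ℝ :=
  ∏ i ∈ Finset.range n, (Polynomial.X + Polynomial.C (c + i))

lemma pochPoly_eval (c : ℝ) (n : ℕ) (x : ℝ) : (pochPoly c n).eval x = poch (c + x) n := by
  simp only [pochPoly, poch, Polynomial.eval_prod]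
  exact Finset.prod_congr rfl fun i _ => by simp; ring

lemma pochPoly_natDegree (c : ℝ) (n : ℕ) : (pochPoly c n).natDegree ≤ n := by
  unfold pochPoly
  refine (Polynomial.natDegree_prod_le _ _).trans ?_
  calc _ ≤ ∑ _i ∈ Finset.range n, 1 := Finset.sum_le_sum fun i _ => by
        rw [Polynomial.natDegree_X_add_C]
    _ = n := by simp

lemma alt_sum_poly (m : ℕ) (q : Polynomial ℝ) (hq : q.natDegree < m) :
    ∑ i ∈ Finset.range (m + 1), (-1 : ℝ) ^ i * (m.choose i : ℝ) * q.eval (i : ℝ) = 0 := by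
  have h := congrFun (Polynomial.fwdDiff_iter_eq_zero_of_degree_lt hq) 0
  rw [fwdDiff_iter_eq_sum_shift] at h
  simp only [Pi.zero_apply] at h
  have h2 : ∑ i ∈ Finset.range (m + 1), (-1 : ℝ) ^ i * (m.choose i : ℝ) * q.eval (i : ℝ)
      = (-1) ^ m * ∑ k ∈ Finset.range (m + 1),
        ((-1 : ℤ) ^ (m - k) * (m.choose k : ℤ)) • Polynomial.eval (0 + k • (1 : ℝ)) q := by
    rw [Finset.mul_sum]
    refine Finset.sum_congr rfl fun i hi => ?_
    have him : i ≤ m := Nat.lt_succ_iff.1 (Finset.mem_range.1 hi)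
    obtain ⟨j, rfl⟩ := Nat.exists_eq_add_of_le him
    have : (-1 : ℝ) ^ j * (-1) ^ j = 1 := by rw [← mul_pow]; simp
    simp only [zsmul_eq_mul, nsmul_eq_mul, mul_one, zero_add, Nat.add_sub_cancel_left]
    push_cast
    rw [pow_add]
    linear_combination (-(-1 : ℝ) ^ i * ((i + j).choose i : ℝ) * q.eval (i : ℝ)) * this
  rw [h2, h, mul_zero]

lemma alt_sum_inv (m : ℕ) : ∀ x : ℝ, 0 < x →
    ∑ i ∈ Finset.range (m + 1), (-1 : ℝ) ^ i * (m.choose i : ℝ) * (1 / (x + i))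
      = m.factorial / poch x (m + 1) := by
  induction m with
  | zero => intro x hx; simp [poch]
  | succ m ih =>
    intro x hx
    have key : ∑ i ∈ Finset.range (m + 1 + 1),
        (-1 : ℝ) ^ i * ((m + 1).choose i : ℝ) * (1 / (x + i))
        = (∑ i ∈ Finset.range (m + 1), (-1 : ℝ) ^ i * (m.choose i : ℝ) * (1 / (x + i)))
        - ∑ i ∈ Finset.range (m + 1), (-1 : ℝ) ^ i * (m.choose i : ℝ) * (1 / ((x + 1) + i)) := by
      rw [Finset.sum_range_succ']
      have e : ∑ i ∈ Finset.range (m + 1), (-1 : ℝ) ^ i * (m.choose i : ℝ) * (1 / (x + i))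
          = ∑ i ∈ Finset.range (m + 1),
            (-1 : ℝ) ^ (i + 1) * (m.choose (i + 1) : ℝ) * (1 / (x + (i + 1 : ℕ)))
            + 1 / x := by
        have := Finset.sum_range_succ' (fun i : ℕ =>
          (-1 : ℝ) ^ i * (m.choose i : ℝ) * (1 / (x + i))) (m + 1)
        rw [Finset.sum_range_succ] at this
        simpa using this
      rw [e]
      have e2 : ∀ i ∈ Finset.range (m + 1),
          (-1 : ℝ) ^ (i + 1) * ((m + 1).choose (i + 1) : ℝ) * (1 / (x + (i + 1 : ℕ)))
          = (-1 : ℝ) ^ (i + 1) * (m.choose (i + 1) : ℝ) * (1 / (x + (i + 1 : ℕ)))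
            - (-1 : ℝ) ^ i * (m.choose i : ℝ) * (1 / ((x + 1) + i)) := by
        intro i _
        rw [Nat.choose_succ_succ]
        push_cast
        rw [show x + ((i : ℝ) + 1) = x + 1 + i by ring, pow_succ]
        ring
      rw [Finset.sum_congr rfl e2, Finset.sum_sub_distrib]
      simp
      ring
    rw [key, ih x hx, ih (x + 1) (by linarith)]
    have p1 : poch x (m + 1 + 1) = poch x (m + 1) * (x + (m + 1)) := by
      rw [poch_succ]; push_cast; ring
    have p2 : poch x (m + 1 + 1) = x * poch (x + 1) (m + 1) := by
      rw [add_comm (m + 1) 1, poch_add]; simp [poch]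
    have hp1 := poch_pos hx (m + 1)
    have hp2 := poch_pos (show (0 : ℝ) < x + 1 by linarith) (m + 1)
    have hp3 := poch_pos hx (m + 1 + 1)
    have q1 : (m.factorial : ℝ) / poch x (m + 1)
        = m.factorial * (x + (m + 1)) / poch x (m + 1 + 1) := by
      rw [p1]; have : 0 < x + (m + 1) := by positivity
      field_simp
    have q2 : (m.factorial : ℝ) / poch (x + 1) (m + 1)
        = m.factorial * x / poch x (m + 1 + 1) := by
      rw [p2]; field_simp
    rw [q1, q2, Nat.factorial_succ]
    push_cast
    ring

/-- Coefficients of the extremal (Jacobi type) polynomial. -/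
def hcoef (A : ℝ) (m R i : ℕ) : ℝ :=
  (-1) ^ i * (m.choose i : ℝ) * (poch (m + 2 * A + R) i / poch (A + R + 1) i)

/-- The extremal polynomial in the variable `s = (1-t)/2`. -/
def Hpol (A : ℝ) (m R : ℕ) : Polynomial ℝ :=
  ∑ i ∈ Finset.range (m + 1), Polynomial.C (hcoef A m R i) * Polynomial.X ^ i

/-- value of the extremal problem. -/
def Ival (A : ℝ) (m R : ℕ) : ℝ :=
  poch A (R + 1) / poch (2 * A) (m + R) * (poch A m * m.factorial / poch (A + R) (m + 1))

lemma Hpol_natDegree (A : ℝ) (m R : ℕ) : (Hpol A m R).natDegree ≤ m := by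
  unfold Hpol
  refine Polynomial.natDegree_sum_le_of_forall_le _ _ fun i hi => ?_
  exact (Polynomial.natDegree_C_mul_X_pow_le _ _).trans (Nat.lt_succ_iff.1 (Finset.mem_range.1 hi))

lemma Hpol_eval_zero (A : ℝ) (m R : ℕ) : (Hpol A m R).eval 0 = 1 := by
  unfold Hpol
  rw [Polynomial.eval_finsetSum, Finset.sum_range_succ']
  simp [hcoef, poch]

lemma Ival_pos {A : ℝ} (hA : 0 < A) (m R : ℕ) : 0 < Ival A m R := by
  unfold Ival
  have h1 := poch_pos hA (R + 1)
  have h2 := poch_pos (show 0 < 2 * A by linarith) (m + R)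
  have h3 := poch_pos hA m
  have h4 := poch_pos (show 0 < A + R by positivity) (m + 1)
  positivity

lemma Lam_Hpol_mul {A : ℝ} (Λ : Polynomial ℝ →ₗ[ℝ] ℝ) (m R k : ℕ) (hΛ : ∀ k, Λ (Polynomial.X ^ k) = poch A k / poch (2 * A) k) :
    Λ (Hpol A m R * Polynomial.X ^ k)
      = ∑ i ∈ Finset.range (m + 1), hcoef A m R i * (poch A (i + k) / poch (2 * A) (i + k)) := by
  unfold Hpol
  rw [Finset.sum_mul, map_sum]
  refine Finset.sum_congr rfl fun i _ => ?_
  rw [mul_assoc, ← pow_add, ← Polynomial.smul_eq_C_mul, map_smul, hΛ, smul_eq_mul]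

lemma Lam_orth {A : ℝ} (hA : 0 < A) (Λ : Polynomial ℝ →ₗ[ℝ] ℝ)
    (hΛ : ∀ k, Λ (Polynomial.X ^ k) = poch A k / poch (2 * A) k)
    (m R j : ℕ) (hj : j < m) :
    Λ (Hpol A m R * Polynomial.X ^ (R + 1 + j)) = 0 := by
  rw [Lam_Hpol_mul Λ m R _ hΛ]
  have h := alt_sum_poly m (pochPoly (A + R + 1) j * pochPoly (2 * A + R + 1 + j) (m - 1 - j))
    (lt_of_le_of_lt (Polynomial.natDegree_mul_le.trans
      (add_le_add (pochPoly_natDegree _ _) (pochPoly_natDegree _ _))) (by omega))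
  have h2 : ∀ i ∈ Finset.range (m + 1),
      hcoef A m R i * (poch A (i + (R + 1 + j)) / poch (2 * A) (i + (R + 1 + j)))
      = (poch A (R + 1) / poch (2 * A) (R + m)) * ((-1 : ℝ) ^ i * (m.choose i : ℝ) *
        (pochPoly (A + R + 1) j * pochPoly (2 * A + R + 1 + j) (m - 1 - j)).eval (i : ℝ)) := by
    intro i _
    rw [Polynomial.eval_mul, pochPoly_eval, pochPoly_eval, hcoef]
    have a1 : poch A (i + (R + 1 + j)) = poch A (R + 1) * poch (A + R + 1) i
        * poch (A + R + 1 + i) j := by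
      rw [show i + (R + 1 + j) = R + 1 + i + j by ring, poch_add, poch_add]
      push_cast
      simp only [add_assoc]
    have a2 : poch (2 * A) (R + m) * poch (m + 2 * A + R) i
        = poch (2 * A) (i + (R + 1 + j)) * poch (2 * A + R + 1 + j + i) (m - 1 - j) := by
      have e1 := poch_add (2 * A) (R + m) i
      have e2 := poch_add (2 * A) (i + (R + 1 + j)) (m - 1 - j)
      have e3 : R + m + i = i + (R + 1 + j) + (m - 1 - j) := by omega
      rw [← e3, e1] at e2
      push_cast at e2
      rw [show (m : ℝ) + 2 * A + R = 2 * A + (R + m) by ring,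
        show 2 * A + (R : ℝ) + 1 + j + i = 2 * A + (i + (R + 1 + j)) by ring]
      exact e2
    have b1 := poch_pos (show 0 < A + R + 1 by positivity) i
    have b2 := poch_pos (show 0 < 2 * A by positivity) (R + m)
    have b3 := poch_pos (show 0 < 2 * A by positivity) (i + (R + 1 + j))
    rw [a1]
    have a3 : poch (m + 2 * A + R) i = poch (2 * A) (i + (R + 1 + j)) *
        poch (2 * A + R + 1 + j + i) (m - 1 - j) / poch (2 * A) (R + m) := by
      rw [← a2]; field_simp
    rw [a3]
    field_simp
  rw [Finset.sum_congr rfl h2, ← Finset.mul_sum, h, mul_zero]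

lemma Lam_main {A : ℝ} (hA : 0 < A) (Λ : Polynomial ℝ →ₗ[ℝ] ℝ)
    (hΛ : ∀ k, Λ (Polynomial.X ^ k) = poch A k / poch (2 * A) k)
    (m R : ℕ) (hm : 1 ≤ m) : Λ (Hpol A m R * Polynomial.X ^ R) = Ival A m R := by
  rw [Lam_Hpol_mul Λ m R _ hΛ]
  set p := pochPoly (2 * A + R) m with hp
  set q := p /ₘ (Polynomial.X - Polynomial.C (-(A + R))) with hq
  have hpq : ∀ x : ℝ, poch (2 * A + R + x) m = poch A m + (A + R + x) * q.eval x := by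
    intro x
    have h := Polynomial.modByMonic_add_div p (Polynomial.X - Polynomial.C (-(A + (R : ℝ))))
    rw [Polynomial.modByMonic_X_sub_C_eq_C_eval, hp, pochPoly_eval, ← hp, ← hq] at h
    have h2 := congrArg (Polynomial.eval x) h
    simp only [Polynomial.eval_add, Polynomial.eval_mul, Polynomial.eval_C, Polynomial.eval_sub,
      Polynomial.eval_X] at h2
    rw [hp, pochPoly_eval] at h2
    rw [← h2]
    rw [show 2 * A + (R : ℝ) + -(A + R) = A by ring]
    ring
  have hqd : q.natDegree < m := by
    rw [hq, Polynomial.natDegree_divByMonic _ (Polynomial.monic_X_sub_C _),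
      Polynomial.natDegree_X_sub_C]
    have := pochPoly_natDegree (2 * A + R) m
    rw [← hp] at this
    omega
  have h2 : ∀ i ∈ Finset.range (m + 1),
      hcoef A m R i * (poch A (i + R) / poch (2 * A) (i + R))
      = (poch A (R + 1) / poch (2 * A) (m + R)) * (poch A m * ((-1 : ℝ) ^ i * (m.choose i : ℝ) *
        (1 / (A + R + i))) + (-1 : ℝ) ^ i * (m.choose i : ℝ) * q.eval (i : ℝ)) := by
    intro i _
    have hx : (0 : ℝ) < A + R + i := by positivity
    have h3 := hpq i
    have h4 : q.eval (i : ℝ) = (poch (2 * A + R + i) m - poch A m) / (A + R + i) := by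
      rw [h3]; field_simp; ring
    rw [h4, hcoef]
    have a1 : poch A (i + R) * (A + R + i) = poch A (R + 1) * poch (A + R + 1) i := by
      have e1 := poch_add A (R + 1) i
      have e2 := poch_succ A (i + R)
      rw [show i + R + 1 = R + 1 + i by ring, e1] at e2
      push_cast at e2
      rw [show A + (R : ℝ) + i = A + (i + R) by ring, ← e2, add_assoc]
    have a2 : poch (2 * A) (m + R) * poch (m + 2 * A + R) i
        = poch (2 * A) (i + R) * poch (2 * A + R + i) m := by
      have e1 := poch_add (2 * A) (m + R) i
      have e2 := poch_add (2 * A) (i + R) m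
      rw [show i + R + m = m + R + i by ring, e1] at e2
      push_cast at e2
      rw [show (m : ℝ) + 2 * A + R = 2 * A + (m + R) by ring,
        show 2 * A + (R : ℝ) + i = 2 * A + (i + R) by ring]
      exact e2
    have b1 := poch_pos (show 0 < A + R + 1 by positivity) i
    have b2 := poch_pos (show 0 < 2 * A by positivity) (m + R)
    have b3 := poch_pos (show 0 < 2 * A by positivity) (i + R)
    have a1' : poch A (i + R) = poch A (R + 1) * poch (A + R + 1) i / (A + R + i) := by
      rw [← a1]; field_simp
    have a2' : poch (m + 2 * A + R) i = poch (2 * A) (i + R) * poch (2 * A + R + i) m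
        / poch (2 * A) (m + R) := by
      rw [← a2]; field_simp
    rw [a1', a2']
    field_simp
    ring
  rw [Finset.sum_congr rfl h2, ← Finset.mul_sum, Finset.sum_add_distrib, ← Finset.mul_sum,
    alt_sum_poly m q hqd, alt_sum_inv m (A + R) (by positivity), Ival]
  ring

lemma Lam_repr {A : ℝ} (hA : 0 < A) (Λ : Polynomial ℝ →ₗ[ℝ] ℝ)
    (hΛ : ∀ k, Λ (Polynomial.X ^ k) = poch A k / poch (2 * A) k)
    (m R : ℕ) (hm : 1 ≤ m) (p : Polynomial ℝ) (hp : p.natDegree ≤ m) :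
    Λ (Hpol A m R * Polynomial.X ^ R * p) = p.eval 0 * Ival A m R := by
  have h1 : p = p.divX * Polynomial.X + Polynomial.C (p.coeff 0) :=
    (Polynomial.divX_mul_X_add p).symm
  have h2 : Λ (Hpol A m R * Polynomial.X ^ R * (p.divX * Polynomial.X)) = 0 := by
    have hd : p.divX.natDegree < m := by
      rw [Polynomial.natDegree_divX_eq_natDegree_tsub_one]; omega
    rw [Polynomial.as_sum_range' p.divX m hd, Finset.sum_mul, Finset.mul_sum, map_sum]
    refine Finset.sum_eq_zero fun j hj => ?_
    rw [← Polynomial.C_mul_X_pow_eq_monomial]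
    have : Hpol A m R * Polynomial.X ^ R *
        (Polynomial.C (p.divX.coeff j) * Polynomial.X ^ j * Polynomial.X)
        = Polynomial.C (p.divX.coeff j) * (Hpol A m R * Polynomial.X ^ (R + 1 + j)) := by
      rw [pow_add, pow_add]; ring
    rw [this, ← Polynomial.smul_eq_C_mul, map_smul, Lam_orth hA Λ hΛ m R j (Finset.mem_range.1 hj),
      smul_zero]
  have h3 : Λ (Hpol A m R * Polynomial.X ^ R * Polynomial.C (p.coeff 0))
      = p.eval 0 * Ival A m R := by
    rw [mul_comm _ (Polynomial.C _), ← Polynomial.smul_eq_C_mul, map_smul,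
      Lam_main hA Λ hΛ m R hm, smul_eq_mul, Polynomial.coeff_zero_eq_eval_zero]
  conv_lhs => rw [h1]
  rw [mul_add, map_add, h2, h3, zero_add]

lemma Ival_ratio {A : ℝ} (hA : 0 < A) (m R : ℕ) (hm : 1 ≤ m) :
    Ival A m R ≤ ((A + R) / m) ^ (2 * R) * Ival A m 0 := by
  have hm' : (0 : ℝ) < m := by exact_mod_cast hm
  have p1 := poch_pos hA R
  have p2 := poch_pos (show 0 < A + 1 by linarith) R
  have p3 := poch_pos (show 0 < 2 * A + m by linarith) R
  have p4 := poch_pos (show 0 < A + (m + 1 : ℕ) by positivity) R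
  have p5 := poch_pos (show 0 < 2 * A by linarith) m
  have p6 := poch_pos hA m
  have p7 := poch_pos hA (m + 1)
  have e1 : poch A (R + 1) = A * poch (A + 1) R := by
    rw [add_comm, poch_add]; simp [poch]
  have e2 : poch (2 * A) (m + R) = poch (2 * A) m * poch (2 * A + m) R := poch_add _ _ _
  have e3 : poch (A + R) (m + 1) = poch A (m + 1) * poch (A + (m + 1 : ℕ)) R / poch A R := by
    have a := poch_add A R (m + 1)
    have b := poch_add A (m + 1) R
    rw [add_comm (m + 1) R, a] at b
    rw [← b]; field_simp
  have key : Ival A m R = (poch (A + 1) R / poch (2 * A + m) R) *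
      (poch A R / poch (A + (m + 1 : ℕ)) R) * Ival A m 0 := by
    unfold Ival
    rw [e1, e2, e3]
    simp only [zero_add, add_zero, Nat.cast_zero]
    rw [show poch A 1 = A by simp [poch]]
    field_simp
  rw [key]
  refine mul_le_mul_of_nonneg_right ?_ (Ival_pos hA m 0).le
  rw [two_mul R, pow_add, div_pow]
  have hAR : 0 ≤ A + R := by positivity
  have f1 : poch (A + 1) R ≤ (A + R) ^ R := poch_le_pow (by linarith) R (by linarith)
  have f2 : poch A R ≤ (A + R) ^ R := poch_le_pow (by linarith) R (by linarith)
  have f3 : (m : ℝ) ^ R ≤ poch (2 * A + m) R :=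
    (pow_le_pow_left₀ hm'.le (by linarith) R).trans (poch_ge_pow (by positivity) R)
  have f4 : (m : ℝ) ^ R ≤ poch (A + (m + 1 : ℕ)) R :=
    (pow_le_pow_left₀ hm'.le (by push_cast; linarith) R).trans (poch_ge_pow (by positivity) R)
  gcongr

lemma Ival_zero_eq {A : ℝ} (hA : 0 < A) (m : ℕ) :
    Ival A m 0 = A / (A + m) * (m.factorial / poch (2 * A) m) := by
  unfold Ival
  have p5 := poch_pos (show 0 < 2 * A by linarith) m
  have p6 := poch_pos hA m
  have : 0 < A + m := by positivity
  simp only [zero_add, add_zero, Nat.cast_zero, poch_succ, poch_zero]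
  field_simp

lemma Ival_step {A : ℝ} (hA : 0 < A) (m : ℕ) (hm : 2 * A ≤ m) :
    Ival A m 0 ≤ 4 * Ival A (m + 1) 0 := by
  rw [Ival_zero_eq hA, Ival_zero_eq hA, poch_succ, Nat.factorial_succ]
  have p5 := poch_pos (show 0 < 2 * A by linarith) m
  have hf : (0 : ℝ) < m.factorial := by exact_mod_cast m.factorial_pos
  have hm0 : (0 : ℝ) ≤ m := by positivity
  have e : 4 * (A / (A + ((m + 1 : ℕ) : ℝ)) * (((m + 1) * m.factorial : ℕ) / 
      (poch (2 * A) m * (2 * A + m)))) = (A / (A + m) * (m.factorial / poch (2 * A) m)) *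
      ((2 * (A + m) / (A + m + 1)) * (2 * (m + 1) / (2 * A + m))) := by
    push_cast
    field_simp
    ring
  rw [e]
  refine le_mul_of_one_le_right (by positivity) ?_
  have g1 : 1 ≤ 2 * (A + m) / (A + m + 1) := by
    rw [le_div_iff₀ (by positivity)]
    rcases Nat.eq_zero_or_pos m with h | h
    · subst h; simp at hm; linarith
    · have : (1 : ℝ) ≤ m := by exact_mod_cast h
      linarith
  have g2 : 1 ≤ 2 * ((m : ℝ) + 1) / (2 * A + m) := by
    rw [le_div_iff₀ (by positivity)]
    linarith
  nlinarith

lemma Ival_steps {A : ℝ} (hA : 0 < A) (m k : ℕ) (hm : 2 * A ≤ m) :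
    Ival A m 0 ≤ 4 ^ k * Ival A (m + k) 0 := by
  induction k with
  | zero => simp
  | succ k ih =>
    have := Ival_step hA (m + k) (by push_cast; have : (0 : ℝ) ≤ k := by positivity
                                     linarith)
    calc _ ≤ 4 ^ k * Ival A (m + k) 0 := ih
      _ ≤ 4 ^ k * (4 * Ival A (m + k + 1) 0) := by gcongr
      _ = _ := by rw [pow_succ]; ring_nf

lemma Hpol_bound {A : ℝ} (hA : 0 < A) (m R : ℕ) {s : ℝ} (hs : 0 ≤ s) :
    |(Hpol A m R).eval s| ≤ Real.exp (m * (2 * m + 2 * A + R) * s / (A + R + 1)) := by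
  set Y : ℝ := m * (2 * m + 2 * A + R) * s / (A + R + 1) with hY
  have hY0 : 0 ≤ Y := by positivity
  unfold Hpol
  rw [Polynomial.eval_finsetSum]
  refine (Finset.abs_sum_le_sum_abs _ _).trans ?_
  refine le_trans ?_ (Real.sum_le_exp_of_nonneg hY0 (m + 1))
  refine Finset.sum_le_sum fun i hi => ?_
  have him : (i : ℝ) ≤ m := by exact_mod_cast Nat.lt_succ_iff.1 (Finset.mem_range.1 hi)
  simp only [Polynomial.eval_mul, Polynomial.eval_C, Polynomial.eval_pow, Polynomial.eval_X, hcoef]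
  have b1 := poch_pos (show 0 < A + R + 1 by positivity) i
  have b2 := poch_pos (show 0 < m + 2 * A + R by positivity) i
  have c1 : (m.choose i : ℝ) ≤ m ^ i / i.factorial := Nat.choose_le_pow_div i m
  have c2 : poch (m + 2 * A + R) i ≤ (2 * m + 2 * A + R) ^ i :=
    poch_le_pow (by positivity) i (by linarith)
  have c3 : (A + R + 1) ^ i ≤ poch (A + R + 1) i := poch_ge_pow (by positivity) i
  rw [abs_mul, abs_mul, abs_mul, abs_pow, abs_neg, abs_one, one_pow, one_mul,
    abs_of_nonneg (show (0 : ℝ) ≤ m.choose i by positivity), abs_of_pos (div_pos b2 b1),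
    abs_of_nonneg (pow_nonneg hs i)]
  calc (m.choose i : ℝ) * (poch (m + 2 * A + R) i / poch (A + R + 1) i) * s ^ i
      ≤ (m ^ i / i.factorial) * ((2 * m + 2 * A + R) ^ i / (A + R + 1) ^ i) * s ^ i := by
        gcongr
    _ = Y ^ i / i.factorial := by
        rw [hY, div_pow, mul_pow, mul_pow]; field_simp

lemma poch_ratio_le {A : ℝ} (hA : 1 ≤ A) (J : ℕ) :
    poch A J / poch (2 * A) J ≤ (2 * A / (2 * A + J)) ^ A := by
  induction J with
  | zero =>
    have : 2 * A ≠ 0 := by linarith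
    simp [poch_zero, this]
  | succ J ih =>
    have p1 := poch_pos (show 0 < A by linarith) J
    have p2 := poch_pos (show 0 < 2 * A by linarith) J
    have hJ : (0 : ℝ) ≤ J := by positivity
    rw [poch_succ, poch_succ, mul_div_mul_comm]
    have hb : (A + J) / (2 * A + J) ≤ ((2 * A + J) / (2 * A + (J + 1))) ^ A := by
      have h := one_add_mul_self_le_rpow_one_add (s := -1 / (2 * A + (J + 1))) (by
        rw [le_div_iff₀ (by positivity)]; linarith) hA
      have e : 1 + -1 / (2 * A + (J + 1)) = (2 * A + J) / (2 * A + (J + 1)) := by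
        field_simp; ring
      rw [e] at h
      refine le_trans ?_ h
      have e2 : (A + J) / (2 * A + J) = 1 - A / (2 * A + J) := by field_simp; ring
      have e3 : A / (2 * A + (J + 1)) ≤ A / (2 * A + J) := by gcongr; linarith
      rw [e2]
      have : A * (-1 / (2 * A + (J + 1))) = - (A / (2 * A + (J + 1))) := by ring
      rw [this]; linarith
    calc _ ≤ (2 * A / (2 * A + J)) ^ A * ((2 * A + J) / (2 * A + (J + 1))) ^ A := by gcongr
      _ = (2 * A / (2 * A + (J + 1))) ^ A := by
        rw [← Real.mul_rpow (by positivity) (by positivity)]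
        congr 1
        field_simp
      _ = _ := by push_cast; rfl

lemma poch_one (n : ℕ) : poch 1 n = n.factorial := by
  induction n with
  | zero => simp [poch]
  | succ n ih => rw [poch_succ, ih, Nat.factorial_succ]; push_cast; ring

lemma inv_Ival_le (d n M : ℕ) (hd : 1 ≤ d) (hn : 1 ≤ n) (hM : M ≤ 2 * d * n) :
    1 / Ival ((d : ℝ) / 2) M 0 ≤ (5 * Real.exp 3 * n) ^ d := by
  obtain ⟨e, rfl⟩ := Nat.exists_eq_add_of_le' hd
  have hn' : (1 : ℝ) ≤ n := by exact_mod_cast hn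
  have hM' : (M : ℝ) ≤ 2 * (e + 1 : ℕ) * n := by exact_mod_cast hM
  have hD : (0 : ℝ) < (e + 1 : ℕ) := by positivity
  have p := poch_pos hD M
  have hMf : (0 : ℝ) < M.factorial := by exact_mod_cast M.factorial_pos
  have hef : (0 : ℝ) < e.factorial := by exact_mod_cast e.factorial_pos
  have h1 : 1 / Ival (((e + 1 : ℕ) : ℝ) / 2) M 0
      = (1 + 2 * M / (e + 1 : ℕ)) * (poch (e + 1 : ℕ) M / M.factorial) := by
    rw [Ival_zero_eq (by positivity), show 2 * (((e + 1 : ℕ) : ℝ) / 2) = (e + 1 : ℕ) by ring]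
    field_simp
  have h2 : poch (e + 1 : ℕ) M / M.factorial = ((M + e).choose e : ℝ) := by
    have a := poch_add 1 e M
    rw [poch_one, poch_one] at a
    have b : ((e + M).factorial : ℝ) = (e + M).choose e * e.factorial * M.factorial := by
      rw [Nat.choose_symm_add]
      exact_mod_cast (Nat.add_choose_mul_factorial_mul_factorial e M).symm
    rw [b] at a
    rw [add_comm M e, div_eq_iff hMf.ne']
    have c : (e.factorial : ℝ) * poch (e + 1 : ℕ) M
        = e.factorial * (((e + M).choose e : ℝ) * M.factorial) := by
      rw [show (((e + 1 : ℕ) : ℝ)) = 1 + e by push_cast; ring, ← a]; ring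
    exact mul_left_cancel₀ hef.ne' c
  have h3 : ((M + e).choose e : ℝ) ≤ (n : ℝ) ^ e * Real.exp (3 * (e + 1 : ℕ)) := by
    have a : (1 / (n : ℝ)) ^ e * ((M + e).choose e : ℝ) ≤ (1 / (n : ℝ) + 1) ^ (M + e) := by
      rw [add_pow]
      have := Finset.single_le_sum (f := fun i => (1 / (n : ℝ)) ^ i * 1 ^ (M + e - i)
        * ((M + e).choose i : ℝ)) (s := Finset.range (M + e + 1)) (fun i _ => by positivity)
        (Finset.mem_range.2 (by omega : e < M + e + 1))
      simpa using this
    have b : (1 / (n : ℝ) + 1) ^ (M + e) ≤ Real.exp (3 * (e + 1 : ℕ)) := by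
      calc _ ≤ Real.exp (1 / (n : ℝ)) ^ (M + e) := by
            gcongr; exact Real.add_one_le_exp _
        _ = Real.exp (((M + e : ℕ) : ℝ) * (1 / n)) := by rw [Real.exp_nat_mul]
        _ ≤ _ := by
            apply Real.exp_le_exp.2
            rw [mul_one_div, div_le_iff₀ (by positivity)]
            push_cast at hM' ⊢
            have : (0 : ℝ) ≤ e := by positivity
            nlinarith
    have c := a.trans b
    rw [div_pow, one_pow] at c
    have hne : (0 : ℝ) < (n : ℝ) ^ e := by positivity
    calc ((M + e).choose e : ℝ) = (n : ℝ) ^ e * (1 / (n : ℝ) ^ e * ((M + e).choose e : ℝ)) := by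
          field_simp
      _ ≤ _ := by gcongr
  have h4 : 1 + 2 * (M : ℝ) / (e + 1 : ℕ) ≤ 5 * n := by
    have : 2 * (M : ℝ) / (e + 1 : ℕ) ≤ 4 * n := by
      rw [div_le_iff₀ hD]; nlinarith
    linarith
  rw [h1, h2]
  calc (1 + 2 * (M : ℝ) / (e + 1 : ℕ)) * ((M + e).choose e : ℝ)
      ≤ (5 * n) * ((n : ℝ) ^ e * Real.exp (3 * (e + 1 : ℕ))) := by gcongr
    _ = 5 * (n : ℝ) ^ (e + 1) * Real.exp 3 ^ (e + 1) := by
        rw [mul_comm (3 : ℝ), Real.exp_nat_mul]; ring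
    _ ≤ 5 ^ (e + 1) * (n : ℝ) ^ (e + 1) * Real.exp 3 ^ (e + 1) := by
        gcongr
        exact le_self_pow₀ (by norm_num) (by omega)
    _ = _ := by rw [mul_pow, mul_pow]; ring

/-- Half-line Gaussian moment. -/
def hm (n : ℕ) : ℝ := ∫ r in Ioi (0 : ℝ), r ^ n * Real.exp (-r ^ 2)

/-- Gaussian moment on the line. -/
def gm (n : ℕ) : ℝ := ∫ v : ℝ, v ^ n * Real.exp (-v ^ 2)

lemma hm_eq (n : ℕ) : hm n = 1 / 2 * Real.Gamma (((n : ℝ) + 1) / 2) := by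
  have h := integral_rpow_mul_exp_neg_rpow (p := 2) (q := n) (by norm_num)
    (by have : (0 : ℝ) ≤ n := by positivity
        linarith)
  rw [← h, hm]
  refine setIntegral_congr_fun measurableSet_Ioi fun x hx => ?_
  simp only [Real.rpow_natCast, Real.rpow_two]

lemma hm_pos (n : ℕ) : 0 < hm n := by
  rw [hm_eq]
  have : 0 < Real.Gamma (((n : ℝ) + 1) / 2) := Real.Gamma_pos_of_pos (by positivity)
  positivity

lemma hm_rec (n : ℕ) : hm (n + 2) = ((n : ℝ) + 1) / 2 * hm n := by
  rw [hm_eq, hm_eq]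
  have : (((n + 2 : ℕ) : ℝ) + 1) / 2 = ((n : ℝ) + 1) / 2 + 1 := by push_cast; ring
  rw [this, Real.Gamma_add_one (by positivity)]
  ring

lemma gm_odd (n : ℕ) (hn : Odd n) : gm n = 0 := by
  have h := integral_neg_eq_self (fun v : ℝ => v ^ n * Real.exp (-v ^ 2)) volume
  simp only [hn.neg_pow, even_two.neg_pow, neg_mul, integral_neg] at h
  unfold gm
  linarith

lemma gm_even (n : ℕ) (hn : Even n) : gm n = 2 * hm n := by
  have h := integral_comp_abs (f := fun v : ℝ => v ^ n * Real.exp (-v ^ 2))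
  simp only [hn.pow_abs, sq_abs] at h
  exact h

lemma gm_rec (n : ℕ) : gm (n + 2) = ((n : ℝ) + 1) / 2 * gm n := by
  rcases Nat.even_or_odd n with hn | hn
  · rw [gm_even _ hn, gm_even _ (by exact hn.add even_two), hm_rec]; ring
  · rw [gm_odd _ hn, gm_odd _ (by exact hn.add_even even_two)]; ring

/-- The monomial `y ^ α` on Euclidean space. -/
def mono {d : ℕ} (α : Fin (d + 1) → ℕ) (y : EuclideanSpace ℝ (Fin (d + 1))) : ℝ :=
  ∏ i, y i ^ α i

lemma polar_mono {d : ℕ} (α : Fin (d + 1) → ℕ) :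
    (∫ ω : Sph d, mono α ω ∂(volume : Measure (EuclideanSpace ℝ (Fin (d + 1)))).toSphere) *
      hm ((∑ i, α i) + d) = ∏ i, gm (α i) := by
  set μ := (volume : Measure (EuclideanSpace ℝ (Fin (d + 1))))
  have h1 : ∫ x, mono α x * Real.exp (-‖x‖ ^ 2) ∂μ = ∏ i, gm (α i) := by
    have e := (EuclideanSpace.volume_preserving_symm_measurableEquiv_toLp (Fin (d+1))).symm
    have := e.integral_comp (MeasurableEquiv.measurableEmbedding _)
      (fun x => mono α x * Real.exp (-‖x‖ ^ 2))
    rw [← this]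
    have h2 : ∀ x : Fin (d+1) → ℝ, mono α ((MeasurableEquiv.toLp 2 (Fin (d+1) → ℝ)) x) *
        Real.exp (-‖(MeasurableEquiv.toLp 2 (Fin (d+1) → ℝ)) x‖ ^ 2) =
        ∏ i, (x i ^ α i * Real.exp (-(x i) ^ 2)) := by
      intro x
      rw [Finset.prod_mul_distrib, ← Real.exp_sum, EuclideanSpace.norm_sq_eq]
      simp [mono, Finset.sum_neg_distrib]
    simp only [MeasurableEquiv.symm_symm]
    simp_rw [h2]
    rw [integral_fintype_prod_volume_eq_prod (fun i (v : ℝ) => v ^ α i * Real.exp (-v ^ 2))]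
    rfl
  rw [← h1]
  have hd : Module.finrank ℝ (EuclideanSpace ℝ (Fin (d + 1))) - 1 = d := by simp
  have h3 : ∫ x, mono α x * Real.exp (-‖x‖ ^ 2) ∂μ =
      ∫ p : Sph d × Ioi (0:ℝ), mono α p.1 * (p.2.1 ^ (∑ i, α i) * Real.exp (-p.2.1 ^ 2))
        ∂μ.toSphere.prod (.volumeIoiPow d) := by
    calc ∫ x, mono α x * Real.exp (-‖x‖ ^ 2) ∂μ
        = ∫ x : ({(0)}ᶜ : Set (EuclideanSpace ℝ (Fin (d + 1)))),
          mono α x.1 * Real.exp (-‖x.1‖ ^ 2) ∂(μ.comap (↑)) := by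
          rw [integral_subtype_comap (measurableSet_singleton _).compl
            (fun x => mono α x * Real.exp (-‖x‖ ^ 2)), MeasureTheory.restrict_compl_singleton]
      _ = _ := by
        have h4 := μ.measurePreserving_homeomorphUnitSphereProd.integral_comp
          (Homeomorph.measurableEmbedding _)
          (fun p : Sph d × Ioi (0:ℝ) =>
            mono α p.1 * (p.2.1 ^ (∑ i, α i) * Real.exp (-p.2.1 ^ 2)))
        rw [hd] at h4
        rw [← h4]
        refine integral_congr_ae (.of_forall fun x => ?_)
        have hx : ‖x.1‖ ≠ 0 := norm_ne_zero_iff.2 x.2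
        simp only [homeomorphUnitSphereProd_apply_fst_coe, homeomorphUnitSphereProd_apply_snd_coe]
        rw [← mul_assoc]
        congr 1
        simp only [mono, PiLp.smul_apply, smul_eq_mul, mul_pow, Finset.prod_mul_distrib]
        rw [Finset.prod_pow_eq_pow_sum, mul_right_comm, ← mul_pow, inv_mul_cancel₀ hx, one_pow,
          one_mul]
  rw [h3, integral_prod_mul (fun ω : Sph d => mono α ω)
    (fun r : Ioi (0:ℝ) => r.1 ^ (∑ i, α i) * Real.exp (-r.1 ^ 2))]
  congr 1
  simp only [Measure.volumeIoiPow, ENNReal.ofReal]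
  rw [integral_withDensity_eq_integral_smul]
  · rw [integral_subtype_comap measurableSet_Ioi fun a ↦ Real.toNNReal (a ^ d) •
      (a ^ (∑ i, α i) * Real.exp (-a ^ 2))]
    refine setIntegral_congr_fun measurableSet_Ioi fun x hx ↦ ?_
    rw [NNReal.smul_def, Real.coe_toNNReal _ (pow_nonneg hx.out.le _), smul_eq_mul]
    ring
  · exact (measurable_subtype_coe.pow_const _).real_toNNReal

instance sphMeasure_prob (d : ℕ) : IsProbabilityMeasure (sphMeasure d) := by
  constructor
  unfold sphMeasure
  rw [Measure.smul_apply, smul_eq_mul]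
  apply ENNReal.inv_mul_cancel
  · rw [Ne, Measure.measure_univ_eq_zero]
    exact Measure.toSphere_ne_zero _
  · exact measure_ne_top _ _

/-- Monomial moments of the sphere. -/
def Mom {d : ℕ} (α : Fin (d + 1) → ℕ) : ℝ := ∫ ω : Sph d, mono α ω ∂sphMeasure d

lemma Mom_eq {d : ℕ} : ∃ c : ℝ, ∀ α : Fin (d + 1) → ℕ,
    Mom α * hm ((∑ i, α i) + d) = c * ∏ i, gm (α i) := by
  refine ⟨(((volume : Measure (EuclideanSpace ℝ (Fin (d + 1)))).toSphere Set.univ)⁻¹).toReal,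
    fun α => ?_⟩
  rw [← polar_mono, Mom, sphMeasure, integral_smul_measure, smul_eq_mul, mul_assoc]

lemma Mom_odd {d : ℕ} (α : Fin (d + 1) → ℕ) (i : Fin (d + 1)) (hi : Odd (α i)) : Mom α = 0 := by
  obtain ⟨c, hc⟩ := Mom_eq (d := d)
  have h := hc α
  rw [Finset.prod_eq_zero (Finset.mem_univ i) (gm_odd _ hi), mul_zero] at h
  exact (mul_eq_zero.1 h).resolve_right (hm_pos _).ne'

lemma Mom_rec {d : ℕ} (α : Fin (d + 1) → ℕ) (i : Fin (d + 1)) :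
    Mom (α + Pi.single i 2) * ((∑ j, α j : ℕ) + (d : ℝ) + 1) = Mom α * ((α i : ℝ) + 1) := by
  obtain ⟨c, hc⟩ := Mom_eq (d := d)
  have h := hc α
  have h' := hc (α + Pi.single i 2)
  have e1 : ∑ j, (α + Pi.single i 2 : Fin (d+1) → ℕ) j = (∑ j, α j) + 2 := by
    simp [Finset.sum_add_distrib]
  have e2 : ∏ j, gm ((α + Pi.single i 2 : Fin (d+1) → ℕ) j) = ((α i : ℝ) + 1) / 2 * ∏ j, gm (α j) := by
    rw [← Finset.mul_prod_erase _ _ (Finset.mem_univ i),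
      ← Finset.mul_prod_erase _ (fun j => gm (α j)) (Finset.mem_univ i)]
    simp only [Pi.add_apply, Pi.single_eq_same]
    rw [gm_rec, mul_assoc]
    congr 2
    refine Finset.prod_congr rfl fun j hj => ?_
    simp [Pi.single_eq_of_ne (Finset.ne_of_mem_erase hj)]
  rw [e1, e2, add_right_comm, hm_rec] at h'
  have hp := hm_pos ((∑ i, α i) + d)
  apply mul_right_cancel₀ hp.ne'
  push_cast at h' ⊢
  linear_combination 2 * h' - ((α i : ℝ) + 1) * h

lemma cint {d : ℕ} {f : Sph d → ℝ} (hf : Continuous f) : Integrable f (sphMeasure d) :=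
  hf.integrable_of_hasCompactSupport (HasCompactSupport.of_compactSpace f)

lemma cont_coord {d : ℕ} (i : Fin (d + 1)) :
    Continuous fun y : Sph d => (y : EuclideanSpace ℝ (Fin (d + 1))) i := by
  fun_prop

lemma cont_mono {d : ℕ} (α : Fin (d + 1) → ℕ) :
    Continuous fun y : Sph d => mono α (y : EuclideanSpace ℝ (Fin (d + 1))) := by
  unfold mono
  fun_prop

lemma cont_poly0 {d : ℕ} (g : Polynomial ℝ) :
    Continuous fun y : Sph d => g.eval ((y : EuclideanSpace ℝ (Fin (d + 1))) 0) :=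
  g.continuous.comp (cont_coord 0)

/-- Zonal integration functional in the variable `t = y₀`, with a weight. -/
def Ltw (d : ℕ) (w : Sph d → ℝ) (hw : Continuous w) : Polynomial ℝ →ₗ[ℝ] ℝ where
  toFun g := ∫ y : Sph d, w y * g.eval ((y : EuclideanSpace ℝ (Fin (d + 1))) 0) ∂sphMeasure d
  map_add' p q := by
    simp only [Polynomial.eval_add, mul_add]
    exact integral_add (cint (hw.mul (cont_poly0 p))) (cint (hw.mul (cont_poly0 q)))
  map_smul' c p := by
    simp only [Polynomial.eval_smul, smul_eq_mul, RingHom.id_apply]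
    rw [← integral_const_mul]
    congr 1
    ext y
    ring

/-- Zonal integration functional in the variable `t = y₀`. -/
def Lt (d : ℕ) : Polynomial ℝ →ₗ[ℝ] ℝ := Ltw d (fun _ => 1) continuous_const

lemma Lt_apply (d : ℕ) (g : Polynomial ℝ) :
    Lt d g = ∫ y : Sph d, g.eval ((y : EuclideanSpace ℝ (Fin (d + 1))) 0) ∂sphMeasure d := by
  simp [Lt, Ltw]

lemma mono_add {d : ℕ} (α β : Fin (d + 1) → ℕ) (y : EuclideanSpace ℝ (Fin (d + 1))) :
    mono (α + β) y = mono α y * mono β y := by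
  simp [mono, pow_add, Finset.prod_mul_distrib]

lemma mono_single {d : ℕ} (i : Fin (d + 1)) (k : ℕ) (y : EuclideanSpace ℝ (Fin (d + 1))) :
    mono (Pi.single i k) y = y i ^ k := by
  unfold mono
  rw [Finset.prod_eq_single i]
  · simp
  · intro j _ hj
    simp [Pi.single_eq_of_ne hj]
  · simp

lemma Ltw_mono (d : ℕ) (γ : Fin (d + 1) → ℕ) (k : ℕ) :
    Ltw d (fun y => mono γ y) (cont_mono γ) (Polynomial.X ^ k) = Mom (γ + Pi.single 0 k) := by
  simp only [Ltw, Mom, mono_add, mono_single]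
  simp

lemma Lt_X_pow (d : ℕ) (k : ℕ) : Lt d (Polynomial.X ^ k) = Mom (d := d) (Pi.single 0 k) := by
  rw [Lt_apply]
  simp [Mom, mono_single]

lemma Lt_ident (d : ℕ) (g : Polynomial ℝ) :
    Lt d ((1 - Polynomial.X ^ 2) * Polynomial.derivative g) = d * Lt d (Polynomial.X * g) := by
  have key : (Lt d) ∘ₗ (LinearMap.mulLeft ℝ (1 - Polynomial.X ^ 2 : Polynomial ℝ)) ∘ₗ
      Polynomial.derivative = (d : ℝ) • ((Lt d) ∘ₗ LinearMap.mulLeft ℝ (Polynomial.X)) := by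
    apply Polynomial.lhom_ext'
    intro m
    ext
    simp only [LinearMap.coe_comp, Function.comp_apply, LinearMap.mulLeft_apply,
      LinearMap.smul_apply, smul_eq_mul, ← Polynomial.X_pow_eq_monomial]
    rcases m with _ | m
    · have h0 : Lt d (Polynomial.X ^ 1) = 0 := by
        rw [Lt_X_pow]
        exact Mom_odd _ 0 (by simp)
      simp at h0 ⊢
      right; exact h0
    · have h1 := Mom_rec (d := d) (Pi.single 0 m) 0
      rw [← Pi.single_add, ← Lt_X_pow, ← Lt_X_pow] at h1
      simp only [Finset.sum_pi_single', Finset.mem_univ, if_true, Pi.single_eq_same] at h1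
      have e1 : (1 - Polynomial.X ^ 2 : Polynomial ℝ) * Polynomial.derivative (Polynomial.X ^ (m+1))
        = ((m : ℝ) + 1) • (Polynomial.X ^ m - Polynomial.X ^ (m + 2)) := by
        rw [Polynomial.derivative_X_pow, Polynomial.smul_eq_C_mul]
        simp
        ring
      rw [e1, map_smul, map_sub, smul_eq_mul, ← pow_succ']
      linear_combination -h1
  have := congrArg (fun l => l g) key
  simpa using this

lemma Lt_U (d k J : ℕ) :
    Lt d (Polynomial.X ^ k * (1 - Polynomial.X ^ 2) ^ (J + 1)) * ((k : ℝ) + d + 2 * J + 1) =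
      ((d : ℝ) + 2 * J) * Lt d (Polynomial.X ^ k * (1 - Polynomial.X ^ 2) ^ J) := by
  have h := Lt_ident d (Polynomial.X ^ (k + 1) * (1 - Polynomial.X ^ 2) ^ J)
  set U := (Polynomial.X ^ k * (1 - Polynomial.X ^ 2) ^ J : Polynomial ℝ) with hU
  set V := (Polynomial.X ^ k * (1 - Polynomial.X ^ 2) ^ (J + 1) : Polynomial ℝ) with hV
  have e1 : (Polynomial.X * (Polynomial.X ^ (k + 1) * (1 - Polynomial.X ^ 2) ^ J) : Polynomial ℝ)
      = U - V := by rw [hU, hV]; ring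
  have e2 : (1 - Polynomial.X ^ 2 : Polynomial ℝ) *
      Polynomial.derivative (Polynomial.X ^ (k + 1) * (1 - Polynomial.X ^ 2) ^ J) =
      ((k : ℝ) + 1) • V - ((2 : ℝ) * J) • (U - V) := by
    rw [hU, hV, Polynomial.derivative_mul, Polynomial.derivative_X_pow, Polynomial.derivative_pow,
      Polynomial.smul_eq_C_mul, Polynomial.smul_eq_C_mul]
    rcases J with _ | J
    · simp; ring
    · have hC : (Polynomial.C (2 : ℝ)) = 2 := rfl
      simp [hC]
      ring
  rw [e1, e2] at h
  simp only [map_sub, map_smul, smul_eq_mul] at h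
  linear_combination h

/-- Even case of the zonal reduction. -/
lemma zonal_even (d : ℕ) (hd : 1 ≤ d) (J : ℕ) : ∀ γ : Fin (d + 1) → ℕ, γ 0 = 0 →
    (∀ j, Even (γ j)) → ∑ j, γ j = 2 * J →
    ∃ c : ℝ, (J = 0 → c = 1) ∧ ∀ k, Mom (γ + Pi.single 0 k) =
      c * Lt d (Polynomial.X ^ k * (1 - Polynomial.X ^ 2) ^ J) := by
  induction J with
  | zero =>
    intro γ _ _ h
    have : γ = 0 := by
      ext j
      have := Finset.sum_eq_zero_iff.1 h j (Finset.mem_univ j)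
      simpa using this
    refine ⟨1, fun _ => rfl, fun k => ?_⟩
    rw [this, zero_add, pow_zero, mul_one, one_mul, Lt_X_pow]
  | succ J ih =>
    intro γ h0 hev hs
    obtain ⟨j, hj⟩ : ∃ j, γ j ≠ 0 := by
      by_contra! hcon
      simp [hcon] at hs
    have hj0 : j ≠ 0 := by rintro rfl; exact hj h0
    have hj2 : 2 ≤ γ j := by
      rcases hev j with ⟨a, ha⟩
      omega
    set γ' : Fin (d + 1) → ℕ := Function.update γ j (γ j - 2) with hγ'
    have hγ : γ = γ' + Pi.single j 2 := by
      ext i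
      by_cases hi : i = j
      · subst hi; simp [hγ', hj2]
      · simp [hγ', hi]
    have hs' : ∑ i, γ' i = 2 * J := by
      have := hs
      rw [hγ] at this
      simp [Finset.sum_add_distrib] at this
      omega
    obtain ⟨c, _, hc⟩ := ih γ' (by simp [hγ', hj0.symm, h0]) (by
      intro i
      by_cases hi : i = j
      · subst hi; simp only [hγ', Function.update_self]
        exact (Nat.even_sub hj2).2 (by simp [hev i])
      · simp [hγ', hi, hev i]) hs'
    have hdJ : (0 : ℝ) < d + 2 * J := by
      have : (1 : ℝ) ≤ d := by exact_mod_cast hd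
      positivity
    refine ⟨c * ((γ' j : ℝ) + 1) / (d + 2 * J), by simp, fun k => ?_⟩
    have h1 := Mom_rec (γ' + Pi.single 0 k) j
    have e : γ' + Pi.single 0 k + Pi.single j 2 = γ + Pi.single 0 k := by
      rw [hγ]; abel
    have e2 : ∑ i, (γ' + Pi.single 0 k : Fin (d + 1) → ℕ) i = 2 * J + k := by
      simp [Finset.sum_add_distrib, hs']
    rw [e, e2, hc k] at h1
    simp only [Pi.add_apply, Pi.single_eq_of_ne hj0] at h1
    have h2 := Lt_U d k J
    have hne : (k : ℝ) + d + 2 * J + 1 ≠ 0 := by positivity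
    have hne2 := hdJ.ne'
    push_cast at h1
    field_simp
    apply mul_right_cancel₀ hne
    linear_combination ((d : ℝ) + 2 * J) * h1 - c * ((γ' j : ℝ) + 1) * h2

lemma poly_lin_ext {M : Type*} [AddCommGroup M] [Module ℝ M] {f g : Polynomial ℝ →ₗ[ℝ] M}
    (h : ∀ k, f (Polynomial.X ^ k) = g (Polynomial.X ^ k)) : f = g := by
  apply Polynomial.lhom_ext'
  intro m
  ext
  simpa [← Polynomial.X_pow_eq_monomial] using h m

lemma zonal_mono (d : ℕ) (hd : 1 ≤ d) (γ : Fin (d + 1) → ℕ) :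
    ∃ p : Polynomial ℝ, p.natDegree ≤ ∑ j, γ j ∧
      p.eval 1 = mono γ (EuclideanSpace.single 0 1) ∧
      ∀ g : Polynomial ℝ, Ltw d (fun y => mono γ y) (cont_mono γ) g = Lt d (p * g) := by
  set γ' : Fin (d + 1) → ℕ := Function.update γ 0 0 with hγ'
  have hγ : γ = γ' + Pi.single 0 (γ 0) := by
    ext i
    by_cases hi : i = 0
    · subst hi; simp [hγ']
    · simp [hγ', hi]
  have hsum : ∑ j, γ j = ∑ j, γ' j + γ 0 := by
    conv_lhs => rw [hγ]
    simp [Finset.sum_add_distrib]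
  by_cases hev : ∀ j, Even (γ' j)
  · obtain ⟨J, hJ⟩ : ∃ J, ∑ j, γ' j = 2 * J := (Finset.even_sum _ fun j _ => hev j).two_dvd
    obtain ⟨c, hc1, hc⟩ := zonal_even d hd J γ' (by simp [hγ']) hev hJ
    refine ⟨Polynomial.C c * (Polynomial.X ^ γ 0 * (1 - Polynomial.X ^ 2) ^ J), ?_, ?_, ?_⟩
    · rw [hsum, hJ]
      refine (Polynomial.natDegree_C_mul_le _ _).trans ?_
      refine Polynomial.natDegree_mul_le.trans ?_
      have h1 : (1 - Polynomial.X ^ 2 : Polynomial ℝ).natDegree ≤ 2 := by compute_degree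
      have h2 := Polynomial.natDegree_pow_le_of_le J h1
      have h3 : (Polynomial.X ^ γ 0 : Polynomial ℝ).natDegree ≤ γ 0 :=
        Polynomial.natDegree_X_pow_le _
      omega
    · rw [hγ, mono_add, mono_single]
      rcases Nat.eq_zero_or_pos J with h | h
      · subst h
        have : γ' = 0 := by
          ext j
          have := Finset.sum_eq_zero_iff.1 hJ j (Finset.mem_univ j)
          simpa using this
        simp [hc1 rfl, this, mono]
      · obtain ⟨j, hj⟩ : ∃ j, γ' j ≠ 0 := by
          by_contra! hcon
          simp [hcon] at hJ
          omega
        have hj0 : j ≠ 0 := by rintro rfl; simp [hγ'] at hj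
        have : mono γ' (EuclideanSpace.single 0 1) = 0 := by
          unfold mono
          apply Finset.prod_eq_zero (Finset.mem_univ j)
          simp [hj0, hj]
        simp [this, h.ne']
    · intro g
      have : Ltw d (fun y => mono γ y) (cont_mono γ) = Lt d ∘ₗ LinearMap.mulLeft ℝ
          (Polynomial.C c * (Polynomial.X ^ γ 0 * (1 - Polynomial.X ^ 2) ^ J)) := by
        apply poly_lin_ext
        intro k
        rw [Ltw_mono]
        have e : γ + Pi.single 0 k = γ' + Pi.single 0 (γ 0 + k) := by
          conv_lhs => rw [hγ]
          rw [Pi.single_add, add_assoc]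
        rw [e, hc]
        simp only [LinearMap.coe_comp, Function.comp_apply, LinearMap.mulLeft_apply]
        rw [← smul_eq_mul, ← map_smul, Polynomial.smul_eq_C_mul]
        congr 1
        ring
      rw [this]; rfl
  · push Not at hev
    obtain ⟨j, hj⟩ := hev
    have hj0 : j ≠ 0 := by rintro rfl; simp [hγ'] at hj
    have hj' : Odd (γ j) := by simpa [hγ', hj0] using hj
    refine ⟨0, by simp, ?_, ?_⟩
    · unfold mono
      rw [Finset.prod_eq_zero (Finset.mem_univ j)]
      · simp
      · simp [hj0, hj'.pos.ne']
    · intro g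
      have : Ltw d (fun y => mono γ y) (cont_mono γ) = 0 := by
        apply poly_lin_ext
        intro k
        rw [Ltw_mono]
        apply Mom_odd _ j
        simp [hj0, hj']
      rw [this]; simp

/-- The restriction of a linear isometry to the sphere. -/
def sphMap {d : ℕ} (φ : EuclideanSpace ℝ (Fin (d + 1)) ≃ₗᵢ[ℝ] EuclideanSpace ℝ (Fin (d + 1)))
    (y : Sph d) : Sph d := ⟨φ y, by simp⟩

lemma sphMap_continuous {d : ℕ}
    (φ : EuclideanSpace ℝ (Fin (d + 1)) ≃ₗᵢ[ℝ] EuclideanSpace ℝ (Fin (d + 1))) :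
    Continuous (sphMap φ) := by
  unfold sphMap
  have := φ.continuous
  fun_prop

open scoped Pointwise in
lemma sphMap_mp {d : ℕ}
    (φ : EuclideanSpace ℝ (Fin (d + 1)) ≃ₗᵢ[ℝ] EuclideanSpace ℝ (Fin (d + 1))) :
    MeasurePreserving (sphMap φ) (sphMeasure d) (sphMeasure d) := by
  refine ⟨(sphMap_continuous φ).measurable, ?_⟩
  ext s hs
  rw [Measure.map_apply (sphMap_continuous φ).measurable hs]
  unfold sphMeasure
  rw [Measure.smul_apply, Measure.smul_apply, Measure.toSphere_apply' _ hs,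
    Measure.toSphere_apply' _ ((sphMap_continuous φ).measurable hs)]
  congr 2
  have h : (Ioo (0 : ℝ) 1 • (Subtype.val '' (sphMap φ ⁻¹' s)) : Set (EuclideanSpace ℝ (Fin (d + 1)))) =
      φ ⁻¹' (Ioo (0 : ℝ) 1 • (Subtype.val '' s)) := by
    ext z
    simp only [Set.mem_smul, Set.mem_image, Set.mem_preimage]
    constructor
    · rintro ⟨a, ha, _, ⟨y, hy, rfl⟩, rfl⟩
      exact ⟨a, ha, _, ⟨_, hy, rfl⟩, by simp [sphMap]⟩
    · rintro ⟨a, ha, _, ⟨y, hy, rfl⟩, h⟩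
      refine ⟨a, ha, _, ⟨sphMap φ.symm y, ?_, rfl⟩, ?_⟩
      · simpa [sphMap] using hy
      · apply φ.injective
        simpa [sphMap] using h
  rw [h]
  exact (φ.measurePreserving).measure_preimage_equiv (f := φ.toHomeomorph.toMeasurableEquiv) _

lemma sph_integral_comp {d : ℕ}
    (φ : EuclideanSpace ℝ (Fin (d + 1)) ≃ₗᵢ[ℝ] EuclideanSpace ℝ (Fin (d + 1)))
    (F : Sph d → ℝ) (hF : Continuous F) :
    ∫ y, F (sphMap φ y) ∂sphMeasure d = ∫ y, F y ∂sphMeasure d := by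
  have h := sphMap_mp φ
  conv_rhs => rw [← h.map_eq]
  rw [integral_map h.measurable.aemeasurable hF.aestronglyMeasurable]

lemma exists_rot {d : ℕ} (x : Sph d) :
    ∃ φ : EuclideanSpace ℝ (Fin (d + 1)) ≃ₗᵢ[ℝ] EuclideanSpace ℝ (Fin (d + 1)),
      φ (EuclideanSpace.single 0 1) = x := by
  refine ⟨(ℝ ∙ ((EuclideanSpace.single 0 1 : EuclideanSpace ℝ (Fin (d + 1))) - x))ᗮ.reflection, ?_⟩
  exact Submodule.reflection_sub (by simp)

/-- Composition of a polynomial with a linear map. -/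
def rotPoly {d : ℕ} (φ : EuclideanSpace ℝ (Fin (d + 1)) ≃ₗᵢ[ℝ] EuclideanSpace ℝ (Fin (d + 1)))
    (P : MvPolynomial (Fin (d + 1)) ℝ) : MvPolynomial (Fin (d + 1)) ℝ :=
  MvPolynomial.bind₁ (fun i => ∑ j, MvPolynomial.C ((φ (EuclideanSpace.single j 1)) i) *
    MvPolynomial.X j) P

lemma rotPoly_eval {d : ℕ}
    (φ : EuclideanSpace ℝ (Fin (d + 1)) ≃ₗᵢ[ℝ] EuclideanSpace ℝ (Fin (d + 1)))
    (P : MvPolynomial (Fin (d + 1)) ℝ) (y : EuclideanSpace ℝ (Fin (d + 1))) :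
    MvPolynomial.eval (fun i => y i) (rotPoly φ P) = MvPolynomial.eval (fun i => (φ y) i) P := by
  unfold rotPoly
  rw [← MvPolynomial.coe_aeval_eq_eval, ← MvPolynomial.coe_aeval_eq_eval]
  simp only [RingHom.coe_coe]
  rw [MvPolynomial.aeval_bind₁]
  congr 2
  ext i
  have hy : y = ∑ j, y j • (EuclideanSpace.single j (1:ℝ) : EuclideanSpace ℝ (Fin (d + 1))) := by
    ext i
    simp [Pi.single_apply]
  conv_rhs => rw [hy, map_sum]
  simp [mul_comm]

lemma rotPoly_deg {d : ℕ}
    (φ : EuclideanSpace ℝ (Fin (d + 1)) ≃ₗᵢ[ℝ] EuclideanSpace ℝ (Fin (d + 1)))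
    (P : MvPolynomial (Fin (d + 1)) ℝ) : (rotPoly φ P).totalDegree ≤ P.totalDegree := by
  unfold rotPoly
  conv_lhs => rw [P.as_sum, map_sum]
  refine MvPolynomial.totalDegree_finsetSum_le fun γ hγ => ?_
  rw [MvPolynomial.bind₁_monomial]
  refine (MvPolynomial.totalDegree_mul _ _).trans ?_
  rw [MvPolynomial.totalDegree_C, zero_add]
  refine (MvPolynomial.totalDegree_finsetProd _ _).trans ?_
  refine le_trans ?_ (MvPolynomial.le_totalDegree hγ)
  refine Finset.sum_le_sum fun i _ => ?_
  refine (MvPolynomial.totalDegree_pow _ _).trans ?_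
  have : (∑ j, MvPolynomial.C ((φ (EuclideanSpace.single j 1)) i) *
    (MvPolynomial.X j : MvPolynomial (Fin (d + 1)) ℝ)).totalDegree ≤ 1 := by
    refine MvPolynomial.totalDegree_finsetSum_le fun j _ => ?_
    refine (MvPolynomial.totalDegree_mul _ _).trans ?_
    simp
  nlinarith

lemma cont_mv {d : ℕ} (P : MvPolynomial (Fin (d + 1)) ℝ) : Continuous fun y : Sph d =>
    MvPolynomial.eval (fun i => (y : EuclideanSpace ℝ (Fin (d + 1))) i) P := by
  refine (MvPolynomial.continuous_eval P).comp ?_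
  fun_prop

lemma zonal_e0 (d : ℕ) (hd : 1 ≤ d) (P : MvPolynomial (Fin (d + 1)) ℝ) :
    ∃ p : Polynomial ℝ, p.natDegree ≤ P.totalDegree ∧
      p.eval 1 = MvPolynomial.eval
        (fun i => (EuclideanSpace.single 0 1 : EuclideanSpace ℝ (Fin (d + 1))) i) P ∧
      ∀ g : Polynomial ℝ, ∫ y : Sph d,
        MvPolynomial.eval (fun i => (y : EuclideanSpace ℝ (Fin (d + 1))) i) P *
          g.eval ((y : EuclideanSpace ℝ (Fin (d + 1))) 0) ∂sphMeasure d = Lt d (p * g) := by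
  choose q hq1 hq2 hq3 using zonal_mono d hd
  have hP : ∀ z : EuclideanSpace ℝ (Fin (d + 1)), MvPolynomial.eval (fun i => z i) P =
      ∑ γ ∈ P.support, P.coeff γ * mono (fun i => γ i) z := by
    intro z
    rw [MvPolynomial.eval_eq']
    rfl
  refine ⟨∑ γ ∈ P.support, Polynomial.C (P.coeff γ) * q (fun i => γ i), ?_, ?_, ?_⟩
  · refine Polynomial.natDegree_sum_le_of_forall_le _ _ fun γ hγ => ?_
    refine (Polynomial.natDegree_C_mul_le _ _).trans ((hq1 _).trans ?_)
    refine le_trans (le_of_eq ?_) (MvPolynomial.le_totalDegree hγ)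
    rw [Finsupp.sum_fintype]
    simp
  · rw [hP, Polynomial.eval_finsetSum]
    refine Finset.sum_congr rfl fun γ _ => ?_
    rw [Polynomial.eval_mul, Polynomial.eval_C, hq2]
  · intro g
    simp_rw [hP, Finset.sum_mul]
    rw [integral_finsetSum]
    · rw [map_sum]
      refine Finset.sum_congr rfl fun γ _ => ?_
      have := hq3 (fun i => γ i) g
      rw [mul_assoc, ← Polynomial.smul_eq_C_mul, map_smul, ← this, smul_eq_mul]
      simp only [Ltw, LinearMap.coe_mk, AddHom.coe_mk]
      rw [← integral_const_mul]
      simp only [mul_assoc]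
    · intro γ _
      exact cint ((continuous_const.mul (cont_mono _)).mul (cont_poly0 g))

/-- Half chord-square parameter `s = (1 - x·y)/2`. -/
def sv {d : ℕ} (x y : Sph d) : ℝ := (1 - ip x y) / 2

lemma sv_cont {d : ℕ} (x : Sph d) : Continuous fun y => sv x y := by
  unfold sv ip
  fun_prop

lemma cont_svpoly {d : ℕ} (x : Sph d) (g : Polynomial ℝ) :
    Continuous fun y => g.eval (sv x y) := g.continuous.comp (sv_cont x)

/-- Zonal integration functional in the variable `s = (1 - t)/2`. -/
def Ls (d : ℕ) : Polynomial ℝ →ₗ[ℝ] ℝ where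
  toFun g := Lt d (g.comp (Polynomial.C (1/2) * (1 - Polynomial.X)))
  map_add' p q := by rw [Polynomial.add_comp, map_add]
  map_smul' c p := by rw [Polynomial.smul_comp, map_smul]; rfl

lemma Ls_def (d : ℕ) (g : Polynomial ℝ) :
  Ls d g = Lt d (g.comp (Polynomial.C (1/2) * (1 - Polynomial.X))) := rfl

lemma zonal (d : ℕ) (hd : 1 ≤ d) (x : Sph d) (P : MvPolynomial (Fin (d + 1)) ℝ) :
    ∃ p : Polynomial ℝ, p.natDegree ≤ P.totalDegree ∧
      p.eval 0 = MvPolynomial.eval (fun i => (x : EuclideanSpace ℝ (Fin (d + 1))) i) P ∧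
      ∀ g : Polynomial ℝ, ∫ y : Sph d,
        MvPolynomial.eval (fun i => (y : EuclideanSpace ℝ (Fin (d + 1))) i) P *
          g.eval (sv x y) ∂sphMeasure d = Ls d (p * g) := by
  obtain ⟨φ, hφ⟩ := exists_rot x
  obtain ⟨p, hp1, hp2, hp3⟩ := zonal_e0 d hd (rotPoly φ P)
  refine ⟨p.comp (1 - Polynomial.C 2 * Polynomial.X), ?_, ?_, ?_⟩
  · rw [Polynomial.natDegree_comp]
    have h1 : (1 - Polynomial.C 2 * Polynomial.X : Polynomial ℝ).natDegree ≤ 1 := by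
      compute_degree
    have := hp1.trans (rotPoly_deg φ P)
    nlinarith
  · rw [Polynomial.eval_comp]
    simp only [Polynomial.eval_sub, Polynomial.eval_one, Polynomial.eval_mul, Polynomial.eval_C,
      Polynomial.eval_X, mul_zero, sub_zero]
    rw [hp2, rotPoly_eval, hφ]
  · intro g
    rw [Ls_def, Polynomial.mul_comp, Polynomial.comp_assoc]
    have e : ((1 - Polynomial.C 2 * Polynomial.X : Polynomial ℝ).comp
        (Polynomial.C (1/2) * (1 - Polynomial.X))) = Polynomial.X := by
      simp only [Polynomial.sub_comp, Polynomial.one_comp, Polynomial.mul_comp, Polynomial.C_comp,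
        Polynomial.X_comp]
      rw [← mul_assoc, ← Polynomial.C_mul]
      norm_num
    rw [e, Polynomial.comp_X, ← hp3, ← sph_integral_comp φ
      (fun y => MvPolynomial.eval (fun i => (y : EuclideanSpace ℝ (Fin (d + 1))) i) P *
        g.eval (sv x y)) ((cont_mv P).mul (cont_svpoly x g))]
    refine integral_congr_ae (.of_forall fun y => ?_)
    simp only [rotPoly_eval, Polynomial.eval_comp]
    have h2 : sv x (sphMap φ y) = (1 - (y : EuclideanSpace ℝ (Fin (d + 1))) 0) / 2 := by
      unfold sv ip sphMap
      rw [← hφ]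
      simp [LinearIsometryEquiv.inner_map_map, EuclideanSpace.inner_single_left]
    rw [h2]
    simp [sphMap]
    left
    congr 1
    ring

lemma Ls_apply (d : ℕ) (x : Sph d) (g : Polynomial ℝ) :
    ∫ y : Sph d, g.eval (sv x y) ∂sphMeasure d = Ls d g := by
  obtain ⟨φ, hφ⟩ := exists_rot x
  rw [Ls_def, Lt_apply, ← sph_integral_comp φ _ (cont_svpoly x g)]
  refine integral_congr_ae (.of_forall fun y => ?_)
  have h2 : sv x (sphMap φ y) = (1 - (y : EuclideanSpace ℝ (Fin (d + 1))) 0) / 2 := by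
    unfold sv ip sphMap
    rw [← hφ]
    simp [LinearIsometryEquiv.inner_map_map, EuclideanSpace.inner_single_left]
  simp only [h2, Polynomial.eval_comp]
  congr 1
  simp
  ring

lemma Ls_moment (d : ℕ) (hd : 1 ≤ d) (k : ℕ) :
    Ls d (Polynomial.X ^ k) = poch ((d : ℝ) / 2) k / poch (2 * ((d : ℝ) / 2)) k := by
  have hd' : (1 : ℝ) ≤ d := by exact_mod_cast hd
  induction k with
  | zero =>
    rw [Ls_def, Lt_apply]
    simp [poch_zero]
  | succ k ih =>
    have h := Lt_ident d ((Polynomial.C (1/2) * (1 - Polynomial.X)) ^ k)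
    have hk : Ls d (Polynomial.X ^ (k + 1)) * (2 * k + 2 * d) =
        (d + 2 * k) * Ls d (Polynomial.X ^ k) := by
      rw [Ls_def, Ls_def]
      simp only [Polynomial.X_pow_comp]
      set U := ((Polynomial.C (1/2) * (1 - Polynomial.X)) ^ k : Polynomial ℝ) with hU
      set V := ((Polynomial.C (1/2) * (1 - Polynomial.X)) ^ (k + 1) : Polynomial ℝ) with hV
      have hC : (2 : Polynomial ℝ) * Polynomial.C (1/2) = 1 := by
        have : (2 : Polynomial ℝ) = Polynomial.C 2 := rfl
        rw [this, ← Polynomial.C_mul]; norm_num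
      have e1 : Polynomial.X * U = U - (2 : ℝ) • V := by
        have hC2 : (Polynomial.C (2 : ℝ)) = 2 := rfl
        rw [hU, hV, Polynomial.smul_eq_C_mul, hC2, pow_succ]
        linear_combination (Polynomial.C (1/2) * (1 - Polynomial.X)) ^ k *
          (1 - Polynomial.X) * hC
      have e2 : (1 - Polynomial.X ^ 2) * Polynomial.derivative U =
          (2 * (k : ℝ)) • (V - U) := by
        have hC2 : (Polynomial.C (2 : ℝ)) = 2 := rfl
        rw [hU, hV, Polynomial.derivative_pow, Polynomial.smul_eq_C_mul]
        rcases k with _ | k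
        · simp
        · simp only [Polynomial.derivative_mul, Polynomial.derivative_C, Polynomial.derivative_sub,
            Polynomial.derivative_one, Polynomial.derivative_X, map_mul, hC2, map_natCast]
          rw [Nat.add_sub_cancel]
          generalize hc : (Polynomial.C (1/2) : Polynomial ℝ) = c at *
          simp only [pow_succ, mul_pow]
          linear_combination (-(((k + 1 : ℕ) : Polynomial ℝ) * (c ^ k * (1 - Polynomial.X) ^ k * c * (1 - Polynomial.X) * (1 - Polynomial.X)))) * hC
      rw [e1, e2] at h
      simp only [map_smul, map_sub, smul_eq_mul] at h
      linear_combination h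
    rw [poch_succ, poch_succ]
    have p1 := poch_pos (a := 2 * ((d : ℝ) / 2)) (by positivity) k
    have hne : (2 * (k : ℝ) + 2 * d) ≠ 0 := by positivity
    have hne2 : (2 * ((d : ℝ) / 2) + k) ≠ 0 := by positivity
    rw [ih] at hk
    apply mul_right_cancel₀ hne
    rw [hk]
    field_simp
    ring

lemma Lt_neg (d : ℕ) (g : Polynomial ℝ) : Lt d (g.comp (-Polynomial.X)) = Lt d g := by
  obtain ⟨φ, hφ⟩ : ∃ φ : EuclideanSpace ℝ (Fin (d + 1)) ≃ₗᵢ[ℝ] EuclideanSpace ℝ (Fin (d + 1)),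
    ∀ y, φ y = -y := ⟨LinearIsometryEquiv.neg ℝ, fun y => rfl⟩
  rw [Lt_apply, Lt_apply, ← sph_integral_comp φ _ (cont_poly0 g)]
  simp [sphMap, hφ]

lemma Ls_one_sub (d : ℕ) (hd : 1 ≤ d) (k : ℕ) :
    Ls d ((1 - Polynomial.X) ^ k) = poch ((d : ℝ) / 2) k / poch (2 * ((d : ℝ) / 2)) k := by
  rw [← Ls_moment d hd, Ls_def, Ls_def, ← Lt_neg d ((Polynomial.X ^ k).comp _)]
  congr 1
  simp only [Polynomial.X_pow_comp, Polynomial.pow_comp, Polynomial.sub_comp, Polynomial.one_comp,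
    Polynomial.X_comp, Polynomial.mul_comp, Polynomial.C_comp]
  congr 1
  have hC : (1 : Polynomial ℝ) = Polynomial.C (1/2) + Polynomial.C (1/2) := by
    rw [← Polynomial.C_add]; norm_num
  linear_combination hC

/-- The convolution of `f` with a zonal polynomial is a polynomial. -/
lemma conv_poly (d : ℕ) (f : Sph d → ℝ) (hf : Continuous f) (g : Polynomial ℝ) :
    ∃ P : MvPolynomial (Fin (d + 1)) ℝ, P.totalDegree ≤ g.natDegree ∧ ∀ x : Sph d,
      MvPolynomial.eval (fun i => (x : EuclideanSpace ℝ (Fin (d + 1))) i) P =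
        ∫ y : Sph d, f y * g.eval (sv x y) ∂sphMeasure d := by
  set q := g.comp (Polynomial.C (1/2) * (1 - Polynomial.X)) with hq
  have hqd : q.natDegree ≤ g.natDegree := by
    rw [hq, Polynomial.natDegree_comp]
    have h1 : (Polynomial.C (1/2) * (1 - Polynomial.X) : Polynomial ℝ).natDegree ≤ 1 := by
      compute_degree
    nlinarith
  have hqe : ∀ x y : Sph d, g.eval (sv x y) = q.eval (ip x y) := by
    intro x y
    rw [hq, Polynomial.eval_comp]
    simp [sv]
    congr 1
    ring
  refine ⟨∑ k ∈ Finset.range (q.natDegree + 1), ∑ t : Fin k → Fin (d + 1),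
    MvPolynomial.C (q.coeff k * ∫ y : Sph d, f y *
      ∏ i, (y : EuclideanSpace ℝ (Fin (d + 1))) (t i) ∂sphMeasure d) *
      ∏ i, MvPolynomial.X (t i), ?_, ?_⟩
  · refine MvPolynomial.totalDegree_finsetSum_le fun k hk => ?_
    refine MvPolynomial.totalDegree_finsetSum_le fun t _ => ?_
    refine (MvPolynomial.totalDegree_mul _ _).trans ?_
    rw [MvPolynomial.totalDegree_C, zero_add]
    refine (MvPolynomial.totalDegree_finsetProd _ _).trans ?_
    simp only [MvPolynomial.totalDegree_X, Finset.sum_const, Finset.card_univ, Fintype.card_fin,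
      smul_eq_mul, mul_one]
    have := Finset.mem_range.1 hk
    omega
  · intro x
    simp only [map_sum, map_mul, map_prod, MvPolynomial.eval_C, MvPolynomial.eval_X]
    have h1 : ∀ y : Sph d, f y * g.eval (sv x y) = ∑ k ∈ Finset.range (q.natDegree + 1),
        ∑ t : Fin k → Fin (d + 1), (q.coeff k * ∏ i, (x : EuclideanSpace ℝ (Fin (d + 1))) (t i)) *
          (f y * ∏ i, (y : EuclideanSpace ℝ (Fin (d + 1))) (t i)) := by
      intro y
      rw [hqe, Polynomial.eval_eq_sum_range, Finset.mul_sum]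
      refine Finset.sum_congr rfl fun k _ => ?_
      have : ip x y = ∑ i, (x : EuclideanSpace ℝ (Fin (d + 1))) i *
          (y : EuclideanSpace ℝ (Fin (d + 1))) i := by
        unfold ip
        rw [PiLp.inner_apply]
        refine Finset.sum_congr rfl fun i _ => ?_
        simp [mul_comm]
      rw [this, Fintype.sum_pow, Finset.mul_sum, Finset.mul_sum]
      refine Finset.sum_congr rfl fun t _ => ?_
      rw [Finset.prod_mul_distrib]
      ring
    have hI : ∀ (k : ℕ) (t : Fin k → Fin (d + 1)), Integrable (fun y : Sph d =>
        (q.coeff k * ∏ i, (x : EuclideanSpace ℝ (Fin (d + 1))) (t i)) *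
          (f y * ∏ i, (y : EuclideanSpace ℝ (Fin (d + 1))) (t i))) (sphMeasure d) := by
      intro k t
      apply cint
      fun_prop
    simp_rw [h1]
    rw [integral_finsetSum]
    · refine Finset.sum_congr rfl fun k _ => ?_
      rw [integral_finsetSum]
      · refine Finset.sum_congr rfl fun t _ => ?_
        rw [integral_const_mul]
        ring
      · intro t _
        exact hI k t
    · intro k _
      exact integrable_finsetSum _ fun t _ => hI k t

lemma lagrange_bound (N : ℕ) (q : Polynomial ℂ) (hq : q.natDegree ≤ N) (v : ℕ → ℂ) (h A : ℝ)
    (hh : 0 < h) (hA : 0 ≤ A) (hv : ∀ j, ‖v j‖ ≤ 1)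
    (hsep : ∀ i ∈ Finset.range (N + 1), ∀ j ∈ Finset.range (N + 1), i ≠ j → h ≤ ‖v i - v j‖)
    (hqv : ∀ j ∈ Finset.range (N + 1), ‖q.eval (v j)‖ ≤ A) (z : ℂ) (hz : ‖z‖ ≤ 1) :
    ‖q.eval z‖ ≤ (N + 1) * A * (2 / h) ^ N := by
  have hinj : Set.InjOn v (Finset.range (N + 1)) := by
    intro i hi j hj hij
    by_contra hne
    have := hsep i hi j hj hne
    rw [hij, sub_self, norm_zero] at this
    linarith
  have hdeg : q.degree < (Finset.range (N + 1)).card := by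
    rw [Finset.card_range]
    exact lt_of_le_of_lt (Polynomial.natDegree_le_iff_degree_le.1 hq) (by exact_mod_cast Nat.lt_succ_self N)
  have e := Lagrange.eq_interpolate hinj hdeg
  rw [e, Lagrange.interpolate_apply, Polynomial.eval_finsetSum]
  refine (norm_sum_le _ _).trans ?_
  calc _ ≤ ∑ j ∈ Finset.range (N + 1), A * (2 / h) ^ N := by
        refine Finset.sum_le_sum fun j hj => ?_
        rw [Polynomial.eval_mul, Polynomial.eval_C, norm_mul]
        refine mul_le_mul (hqv j hj) ?_ (norm_nonneg _) hA
        rw [Lagrange.basis, Polynomial.eval_prod, norm_prod]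
        calc _ ≤ ∏ i ∈ (Finset.range (N + 1)).erase j, (2 / h) := by
              refine Finset.prod_le_prod (fun _ _ => norm_nonneg _) fun i hi => ?_
              have hi' := Finset.mem_erase.1 hi
              simp only [Lagrange.basisDivisor, Polynomial.eval_mul, Polynomial.eval_C,
                Polynomial.eval_sub, Polynomial.eval_X, norm_mul, norm_inv]
              have h1 := hsep j hj i hi'.2 hi'.1.symm
              have h2 : ‖z - v i‖ ≤ 2 := (norm_sub_le _ _).trans (by linarith [hv i])
              rw [div_eq_inv_mul]
              gcongr
          _ = _ := by
            rw [Finset.prod_const, Finset.card_erase_of_mem hj, Finset.card_range]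
            simp
    _ = _ := by
      rw [Finset.sum_const, Finset.card_range, nsmul_eq_mul]
      push_cast
      ring

lemma circle_sep (a b : ℝ) (hab : |a - b| ≤ 1) :
    |a - b| / 2 ≤ ‖Complex.exp (a * Complex.I) - Complex.exp (b * Complex.I)‖ := by
  wlog h : b ≤ a generalizing a b
  · have := this b a (by rwa [abs_sub_comm]) (by linarith)
    rwa [abs_sub_comm, norm_sub_rev]
  have e : Complex.exp (a * Complex.I) - Complex.exp (b * Complex.I) =
      Complex.exp (b * Complex.I) * (Complex.exp (Complex.I * ((a - b : ℝ) : ℂ)) - 1) := by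
    rw [mul_sub, ← Complex.exp_add, mul_one]
    congr 2
    push_cast; ring
  rw [e, norm_mul, Complex.norm_exp_ofReal_mul_I, one_mul, Complex.norm_exp_I_mul_ofReal_sub_one]
  have h0 : 0 ≤ a - b := by linarith
  rw [abs_of_nonneg h0] at hab ⊢
  have hpi := Real.pi_gt_three
  have hpi4 := Real.pi_le_four
  have h1 := Real.mul_le_sin (x := (a - b) / 2) (by linarith) (by linarith)
  have h2 : 1 / 2 ≤ 2 / π := by
    rw [div_le_div_iff₀ (by norm_num) (by positivity)]; linarith
  rw [Real.norm_eq_abs]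
  refine le_trans ?_ (le_abs_self _)
  nlinarith

/-- Trigonometric complexification of a polynomial along a great circle. -/
lemma trig_poly {m : ℕ} (P : MvPolynomial (Fin m) ℝ) (k : ℕ) (hk : P.totalDegree ≤ k)
    (x u : Fin m → ℝ) : ∃ q : Polynomial ℂ, q.natDegree ≤ 2 * k ∧ ∀ θ : ℝ,
      q.eval (Complex.exp (θ * Complex.I)) = Complex.exp (θ * Complex.I) ^ k *
        ((MvPolynomial.eval (fun i => x i * Real.cos θ + u i * Real.sin θ) P : ℝ) : ℂ) := by
  set ℓ : Fin m → Polynomial ℂ := fun i =>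
    Polynomial.C ((x i : ℂ) / 2) * (Polynomial.X ^ 2 + 1) +
      Polynomial.C (-(u i : ℂ) * Complex.I / 2) * (Polynomial.X ^ 2 - 1) with hℓ
  have hℓd : ∀ i, (ℓ i).natDegree ≤ 2 := by
    intro i
    simp only [hℓ]
    compute_degree
  have hγ : ∀ γ ∈ P.support, ∑ i, γ i ≤ k := by
    intro γ hγ
    refine le_trans (le_of_eq ?_) ((MvPolynomial.le_totalDegree hγ).trans hk)
    rw [Finsupp.sum_fintype]
    simp
  refine ⟨∑ γ ∈ P.support, Polynomial.C ((P.coeff γ : ℝ) : ℂ) *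
    (Polynomial.X ^ (k - ∑ i, γ i) * ∏ i, ℓ i ^ γ i), ?_, ?_⟩
  · refine Polynomial.natDegree_sum_le_of_forall_le _ _ fun γ hg => ?_
    refine (Polynomial.natDegree_C_mul_le _ _).trans ?_
    refine Polynomial.natDegree_mul_le.trans ?_
    have h1 : (∏ i, ℓ i ^ γ i).natDegree ≤ 2 * ∑ i, γ i := by
      refine (Polynomial.natDegree_prod_le _ _).trans ?_
      rw [Finset.mul_sum]
      refine Finset.sum_le_sum fun i _ => ?_
      rw [mul_comm]
      exact Polynomial.natDegree_pow_le_of_le _ (hℓd i)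
    have h2 := hγ γ hg
    rw [Polynomial.natDegree_X_pow]
    omega
  · intro θ
    set z := Complex.exp (θ * Complex.I) with hz
    have hz0 : z ≠ 0 := Complex.exp_ne_zero _
    have hzz : z = Complex.cos θ + Complex.sin θ * Complex.I := Complex.exp_mul_I _
    have hl : ∀ i, (ℓ i).eval z = z * ((x i * Real.cos θ + u i * Real.sin θ : ℝ) : ℂ) := by
      intro i
      simp only [hℓ]
      simp only [Polynomial.eval_add, Polynomial.eval_mul, Polynomial.eval_C, Polynomial.eval_sub,
        Polynomial.eval_pow, Polynomial.eval_X, Polynomial.eval_one]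
      have hcs : Complex.sin (θ:ℂ) ^ 2 + Complex.cos (θ:ℂ) ^ 2 = 1 := Complex.sin_sq_add_cos_sq _
      have hI : Complex.I ^ 2 = -1 := Complex.I_sq
      have e1 : z ^ 2 + 1 = 2 * z * Complex.cos θ := by
        rw [hzz]
        linear_combination -hcs + Complex.sin (θ:ℂ) ^ 2 * hI
      have e2 : z ^ 2 - 1 = 2 * z * Complex.sin θ * Complex.I := by
        rw [hzz]
        linear_combination hcs - Complex.sin (θ:ℂ) ^ 2 * hI
      rw [e1, e2]
      push_cast
      linear_combination (-(u i : ℂ) * z * Complex.sin θ) * hI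
    rw [Polynomial.eval_finsetSum, MvPolynomial.eval_eq', Complex.ofReal_sum, Finset.mul_sum]
    refine Finset.sum_congr rfl fun γ hg => ?_
    simp only [Polynomial.eval_mul, Polynomial.eval_C, Polynomial.eval_pow, Polynomial.eval_X,
      Polynomial.eval_prod, hl, mul_pow, Finset.prod_mul_distrib, Finset.prod_pow_eq_pow_sum]
    have h3 : z ^ k = z ^ (k - ∑ i, γ i) * z ^ (∑ i, γ i) := by
      rw [← pow_add, Nat.sub_add_cancel (hγ γ hg)]
    rw [h3]
    push_cast
    ring

lemma great_circle {d : ℕ} (hd : 1 ≤ d) (x y : Sph d) :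
    ∃ (u : EuclideanSpace ℝ (Fin (d + 1))) (θ : ℝ), ‖u‖ = 1 ∧
      ⟪(x : EuclideanSpace ℝ (Fin (d + 1))), u⟫ = 0 ∧
      (y : EuclideanSpace ℝ (Fin (d + 1))) = Real.cos θ • (x : EuclideanSpace ℝ (Fin (d + 1))) +
        Real.sin θ • u := by
  have hx : ‖(x : EuclideanSpace ℝ (Fin (d + 1)))‖ = 1 := by simp
  have hy : ‖(y : EuclideanSpace ℝ (Fin (d + 1)))‖ = 1 := by simp
  set c := ⟪(x : EuclideanSpace ℝ (Fin (d + 1))), (y : EuclideanSpace ℝ (Fin (d + 1)))⟫ with hc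
  set w := (y : EuclideanSpace ℝ (Fin (d + 1))) - c • (x : EuclideanSpace ℝ (Fin (d + 1))) with hw
  have hxw : ⟪(x : EuclideanSpace ℝ (Fin (d + 1))), w⟫ = 0 := by
    rw [hw, inner_sub_right, inner_smul_right, real_inner_self_eq_norm_sq, hx, ← hc]; ring
  have hyw : (y : EuclideanSpace ℝ (Fin (d + 1))) =
      c • (x : EuclideanSpace ℝ (Fin (d + 1))) + w := by rw [hw]; abel
  have hn : ‖w‖ ^ 2 = 1 - c ^ 2 := by
    have h1 : ‖(y : EuclideanSpace ℝ (Fin (d + 1)))‖ ^ 2 = c ^ 2 + ‖w‖ ^ 2 := by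
      rw [hyw, norm_add_sq_real, inner_smul_left, hxw, norm_smul, hx]
      simp
    rw [hy] at h1
    linarith
  have hc1 : -1 ≤ c := by nlinarith [sq_nonneg ‖w‖]
  have hc2 : c ≤ 1 := by nlinarith [sq_nonneg ‖w‖]
  have hs : Real.sin (Real.arccos c) = ‖w‖ := by
    rw [Real.sin_arccos, ← hn, Real.sqrt_sq (norm_nonneg _)]
  by_cases hw0 : w = 0
  · have hnt : (ℝ ∙ (x : EuclideanSpace ℝ (Fin (d + 1))))ᗮ ≠ ⊥ := by
      intro h
      have hx0 : (x : EuclideanSpace ℝ (Fin (d + 1))) ≠ 0 := by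
        intro h0; rw [h0] at hx; simp at hx
      haveI : Fact (Module.finrank ℝ (EuclideanSpace ℝ (Fin (d + 1))) = d + 1) := ⟨by simp⟩
      have := Submodule.finrank_orthogonal_span_singleton (𝕜 := ℝ) (n := d) hx0
      rw [h] at this
      simp at this
      omega
    obtain ⟨v, hv, hv0⟩ := Submodule.exists_mem_ne_zero_of_ne_bot hnt
    rw [Submodule.mem_orthogonal_singleton_iff_inner_right] at hv
    refine ⟨‖v‖⁻¹ • v, Real.arccos c, ?_, ?_, ?_⟩
    · rw [norm_smul, norm_inv, norm_norm, inv_mul_cancel₀ (norm_ne_zero_iff.2 hv0)]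
    · rw [inner_smul_right, hv, mul_zero]
    · rw [Real.cos_arccos hc1 hc2, hs, hw0, norm_zero, zero_smul]
      rw [hyw, hw0]
  · refine ⟨‖w‖⁻¹ • w, Real.arccos c, ?_, ?_, ?_⟩
    · rw [norm_smul, norm_inv, norm_norm, inv_mul_cancel₀ (norm_ne_zero_iff.2 hw0)]
    · rw [inner_smul_right, hxw, mul_zero]
    · rw [Real.cos_arccos hc1 hc2, hs, smul_smul, mul_inv_cancel₀ (norm_ne_zero_iff.2 hw0),
        one_smul]
      exact hyw

lemma growth {d : ℕ} (hd : 1 ≤ d) (P : MvPolynomial (Fin (d + 1)) ℝ) (k : ℕ) (hk1 : 1 ≤ k)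
    (hk : P.totalDegree ≤ k) (x : Sph d) (δ A : ℝ) (hδ : 0 < δ) (hδ1 : δ ≤ 1)
    (hP : ∀ y : Sph d, dist x y ≤ δ →
      |MvPolynomial.eval (fun i => (y : EuclideanSpace ℝ (Fin (d + 1))) i) P| ≤ A) (y : Sph d) :
    |MvPolynomial.eval (fun i => (y : EuclideanSpace ℝ (Fin (d + 1))) i) P| ≤
      (2 * k + 1) * A * (8 * k / δ) ^ (2 * k) := by
  have hk0 : (1 : ℝ) ≤ k := by exact_mod_cast hk1
  have hA : 0 ≤ A := (abs_nonneg _).trans (hP x (by simpa using hδ.le))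
  obtain ⟨u, θ, hu, hxu, hy⟩ := great_circle hd x y
  have hx : ‖(x : EuclideanSpace ℝ (Fin (d + 1)))‖ = 1 := by simp
  obtain ⟨q, hq, hqe⟩ := trig_poly P k hk (fun i => (x : EuclideanSpace ℝ (Fin (d + 1))) i)
    (fun i => u i)
  have hnq : ∀ θ : ℝ, ‖q.eval (Complex.exp (θ * Complex.I))‖ = |MvPolynomial.eval (fun i =>
      (x : EuclideanSpace ℝ (Fin (d + 1))) i * Real.cos θ + u i * Real.sin θ) P| := by
    intro θ
    rw [hqe, norm_mul, norm_pow, Complex.norm_exp_ofReal_mul_I, one_pow, one_mul,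
      Complex.norm_real, Real.norm_eq_abs]
  have hcirc : ∀ θ : ℝ, 0 ≤ θ → θ ≤ δ → ‖q.eval (Complex.exp (θ * Complex.I))‖ ≤ A := by
    intro θ h0 h1
    rw [hnq]
    set z : EuclideanSpace ℝ (Fin (d + 1)) :=
      Real.cos θ • (x : EuclideanSpace ℝ (Fin (d + 1))) + Real.sin θ • u with hz
    have hzn : ‖z‖ = 1 := by
      have : ‖z‖ ^ 2 = 1 := by
        rw [hz, norm_add_sq_real, inner_smul_left, inner_smul_right, hxu, norm_smul, norm_smul, hx,
          hu]
        simp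
      nlinarith [norm_nonneg z]
    have hxz : dist (x : EuclideanSpace ℝ (Fin (d + 1))) z ≤ δ := by
      rw [dist_eq_norm]
      have h2 : ‖(x : EuclideanSpace ℝ (Fin (d + 1))) - z‖ ^ 2 = 2 - 2 * Real.cos θ := by
        rw [norm_sub_sq_real, hzn, hx, hz, inner_add_right, inner_smul_right, inner_smul_right,
          hxu, real_inner_self_eq_norm_sq, hx]
        ring
      have h3 := Real.one_sub_sq_div_two_le_cos (x := θ)
      have h4 : ‖(x : EuclideanSpace ℝ (Fin (d + 1))) - z‖ ^ 2 ≤ δ ^ 2 := by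
        rw [h2]; nlinarith
      exact abs_le_of_sq_le_sq' h4 hδ.le |>.2
    have := hP ⟨z, by simp [hzn]⟩ hxz
    have e : (fun i => z i) = fun i =>
      (x : EuclideanSpace ℝ (Fin (d + 1))) i * Real.cos θ + u i * Real.sin θ := by
      ext i
      simp [hz, mul_comm]
    rw [← e]
    exact this
  have e : (fun i => (y : EuclideanSpace ℝ (Fin (d + 1))) i) = fun i =>
      (x : EuclideanSpace ℝ (Fin (d + 1))) i * Real.cos θ + u i * Real.sin θ := by
    ext i
    simp [hy, mul_comm]
  rw [e, ← hnq]
  have h := lagrange_bound (2 * k) q hq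
    (fun j => Complex.exp (((j * δ / (2 * k) : ℝ) : ℂ) * Complex.I)) (δ / (4 * k)) A
    (by positivity) hA (fun j => by rw [Complex.norm_exp_ofReal_mul_I]) ?_ ?_
    (Complex.exp (θ * Complex.I)) (by rw [Complex.norm_exp_ofReal_mul_I])
  · refine h.trans (le_of_eq ?_)
    have : 2 / (δ / (4 * k)) = 8 * k / δ := by field_simp; norm_num
    rw [this]; push_cast; ring
  · intro i hi j hj hij
    have hi' : (i : ℝ) ≤ 2 * k := by
      have := Finset.mem_range.1 hi
      exact_mod_cast (by omega : i ≤ 2 * k)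
    have hj' : (j : ℝ) ≤ 2 * k := by
      have := Finset.mem_range.1 hj
      exact_mod_cast (by omega : j ≤ 2 * k)
    have hi0 : (0 : ℝ) ≤ i := by positivity
    have hj0 : (0 : ℝ) ≤ j := by positivity
    have e2 : (i * δ / (2 * k) - j * δ / (2 * k) : ℝ) = (i - j) * (δ / (2 * k)) := by ring
    have hpos : 0 < δ / (2 * k) := by positivity
    have hup : |(i - j : ℝ)| ≤ 2 * k := abs_le.2 ⟨by linarith, by linarith⟩
    have hlow : (1 : ℝ) ≤ |(i - j : ℝ)| := by
      have : (1 : ℤ) ≤ |(i : ℤ) - j| := Int.one_le_abs (by omega)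
      exact_mod_cast this
    have h5 := circle_sep (i * δ / (2 * k)) (j * δ / (2 * k)) (by
      rw [e2, abs_mul, abs_of_pos hpos]
      calc _ ≤ 2 * k * (δ / (2 * k)) := by gcongr
        _ = δ := by field_simp
        _ ≤ 1 := hδ1)
    refine le_trans ?_ h5
    rw [e2, abs_mul, abs_of_pos hpos]
    calc δ / (4 * k) = 1 * (δ / (2 * k)) / 2 := by field_simp; norm_num
      _ ≤ _ := by gcongr
  · intro j hj
    have hj' : (j : ℝ) ≤ 2 * k := by
      have := Finset.mem_range.1 hj
      exact_mod_cast (by omega : j ≤ 2 * k)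
    apply hcirc
    · positivity
    · rw [div_le_iff₀ (by positivity)]
      nlinarith

lemma Gamma_poch (a : ℝ) (ha : 0 < a) (j : ℕ) :
    Real.Gamma (a + j) = poch a j * Real.Gamma a := by
  induction j with
  | zero => simp [poch_zero]
  | succ j ih =>
    push_cast
    rw [← add_assoc, Real.Gamma_add_one (by positivity), ih, poch_succ]
    ring

lemma dimPi_bound (d n : ℕ) (hd : 3 ≤ d) (hn : 1 ≤ n) :
    0 < dimPi d (2 * (d + 2) * n) ∧ dimPi d (2 * (d + 2) * n) ≤ (30 * (n : ℝ)) ^ d := by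
  set N := 2 * (d + 2) * n with hN
  have hd' : (3 : ℝ) ≤ d := by exact_mod_cast hd
  have hn' : (1 : ℝ) ≤ n := by exact_mod_cast hn
  have hNc : (N : ℝ) = 2 * (d + 2) * n := by rw [hN]; push_cast; ring
  have hN0 : (2 : ℝ) ≤ N := by rw [hNc]; nlinarith
  have hNd : (N : ℝ) + d ≤ 5 * d * n := by rw [hNc]; nlinarith
  have hG := Real.Gamma_pos_of_pos (show (0 : ℝ) < N by linarith)
  have e1 : (N : ℝ) + d - 1 = N + ((d - 1 : ℕ) : ℝ) := by
    rw [Nat.cast_sub (by omega)]; push_cast; ring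
  have e2 : dimPi d N = (2 * (N : ℝ) + d - 2) * poch N (d - 1) / d.factorial := by
    unfold dimPi
    rw [e1, Gamma_poch _ (by linarith), Real.Gamma_nat_eq_factorial]
    field_simp
  have hp := poch_pos (a := (N : ℝ)) (by linarith) (d - 1)
  have hf : (0 : ℝ) < d.factorial := by positivity
  rw [e2]
  refine ⟨by
    have : 0 < 2 * (N : ℝ) + d - 2 := by linarith
    positivity, ?_⟩
  have h1 : poch (N : ℝ) (d - 1) ≤ ((N : ℝ) + d) ^ (d - 1) :=
    poch_le_pow (by linarith) _ (by rw [← e1]; linarith)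
  have h2 : (2 * (N : ℝ) + d - 2) * poch N (d - 1) ≤ 2 * (5 * d * n) ^ d := by
    calc _ ≤ (2 * ((N : ℝ) + d)) * ((N : ℝ) + d) ^ (d - 1) := by
          apply mul_le_mul _ h1 hp.le (by positivity)
          linarith
      _ = 2 * ((N : ℝ) + d) ^ d := by
          rw [mul_assoc, ← pow_succ', Nat.sub_add_cancel (by omega)]
      _ ≤ _ := by gcongr
  have h3 := Real.pow_div_factorial_le_exp (x := (d : ℝ)) (by positivity) d
  have h4 : Real.exp d ≤ 3 ^ d := by
    rw [← Real.exp_one_pow]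
    have := Real.exp_one_lt_d9
    gcongr
    linarith
  calc _ ≤ 2 * (5 * (d : ℝ) * n) ^ d / (d.factorial : ℝ) := by gcongr
    _ = 2 * (5 * (n : ℝ)) ^ d * ((d : ℝ) ^ d / d.factorial) := by
      rw [show (5 * (d : ℝ) * n) = 5 * n * d by ring, mul_pow (5 * (n : ℝ))]; ring
    _ ≤ 2 ^ d * (5 * (n : ℝ)) ^ d * 3 ^ d := by
      gcongr
      · calc (2 : ℝ) = 2 ^ 1 := by norm_num
          _ ≤ 2 ^ d := by gcongr <;> [norm_num; omega]
      · linarith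
    _ = _ := by
      rw [← mul_pow, ← mul_pow]; ring

lemma dimPi_rpow (d n : ℕ) (r : ℝ) (hr : 0 < r) (hd : 3 ≤ d) (hn : 1 ≤ n) :
    (30 * (n : ℝ)) ^ (-r) ≤ dimPi d (2 * (d + 2) * n) ^ (-(r / (d : ℝ))) := by
  obtain ⟨h1, h2⟩ := dimPi_bound d n hd hn
  have hd' : (3 : ℝ) ≤ d := by exact_mod_cast hd
  have hn' : (1 : ℝ) ≤ n := by exact_mod_cast hn
  have h3 := Real.rpow_le_rpow_of_nonpos h1 h2 (z := -(r / d)) (by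
    have : 0 < r / d := by positivity
    linarith)
  refine le_trans (le_of_eq ?_) h3
  rw [← Real.rpow_natCast, ← Real.rpow_mul (by positivity)]
  congr 1
  field_simp

lemma dist_sq_sv {d : ℕ} (x y : Sph d) : dist x y ^ 2 = 4 * sv x y := by
  have hx : ‖(x : EuclideanSpace ℝ (Fin (d + 1)))‖ = 1 := by simp
  have hy : ‖(y : EuclideanSpace ℝ (Fin (d + 1)))‖ = 1 := by simp
  rw [Subtype.dist_eq, dist_eq_norm, norm_sub_sq_real, hx, hy]
  unfold sv ip
  ring

lemma sv_nonneg {d : ℕ} (x y : Sph d) : 0 ≤ sv x y := by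
  have := dist_sq_sv x y
  nlinarith [sq_nonneg (dist x y)]

lemma sv_le_one {d : ℕ} (x y : Sph d) : sv x y ≤ 1 := by
  have hx : ‖(x : EuclideanSpace ℝ (Fin (d + 1)))‖ = 1 := by simp
  have hy : ‖(y : EuclideanSpace ℝ (Fin (d + 1)))‖ = 1 := by simp
  have := abs_le.1 (abs_real_inner_le_norm (x : EuclideanSpace ℝ (Fin (d + 1))) y)
  rw [hx, hy] at this
  unfold sv ip
  linarith [this.1]

section kernel
variable (d n k : ℕ)

/-- The reproducing factor. -/
def kQ : Polynomial ℝ := Hpol ((d : ℝ) / 2) (d * n + k) 0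

/-- The localizing factor. -/
def kG : Polynomial ℝ := Hpol ((d : ℝ) / 2) (d * n) (4 * k)

/-- The normalization. -/
def kI : ℝ := Ival ((d : ℝ) / 2) (d * n + k) 0

lemma kI_pos (hd : 3 ≤ d) : 0 < kI d n k :=
  Ival_pos (by have : (3 : ℝ) ≤ d := by exact_mod_cast hd
               linarith) _ _

lemma kernel_repr (hd : 3 ≤ d) (hn : 1 ≤ n) (p : Polynomial ℝ) (hp : p.natDegree ≤ k) :
    Ls d (p * (kQ d n k * kG d n k)) = p.eval 0 * kI d n k := by
  have hA : (0 : ℝ) < (d : ℝ) / 2 := by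
    have : (3 : ℝ) ≤ d := by exact_mod_cast hd
    linarith
  have hm : 1 ≤ d * n := Nat.mul_pos (by omega) hn
  have h := Lam_repr hA (Ls d) (Ls_moment d (by omega)) (d * n + k) 0 (by omega)
    (p * kG d n k) (by
      refine Polynomial.natDegree_mul_le.trans ?_
      have := Hpol_natDegree ((d : ℝ) / 2) (d * n) (4 * k)
      unfold kG
      omega)
  rw [pow_zero, mul_one, Polynomial.eval_mul] at h
  have e : p * (kQ d n k * kG d n k) = Hpol ((d : ℝ) / 2) (d * n + k) 0 * (p * kG d n k) := by
    unfold kQ; ring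
  rw [e, h]
  unfold kG kI
  rw [Hpol_eval_zero, mul_one]

lemma kQ_sq (hd : 3 ≤ d) (hn : 1 ≤ n) : Ls d (kQ d n k * kQ d n k) = kI d n k := by
  have hA : (0 : ℝ) < (d : ℝ) / 2 := by
    have : (3 : ℝ) ≤ d := by exact_mod_cast hd
    linarith
  have hm : 1 ≤ d * n := Nat.mul_pos (by omega) hn
  have h := Lam_repr hA (Ls d) (Ls_moment d (by omega)) (d * n + k) 0 (by omega)
    (kQ d n k) (Hpol_natDegree _ _ _)
  rw [pow_zero, mul_one] at h
  have h0 : (kQ d n k).eval 0 = 1 := Hpol_eval_zero _ _ _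
  rw [h0, one_mul] at h
  exact h

lemma kG_sq (hd : 3 ≤ d) (hn : 1 ≤ n) :
    Ls d (kG d n k * Polynomial.X ^ (4 * k) * kG d n k) = Ival ((d : ℝ) / 2) (d * n) (4 * k) := by
  have hA : (0 : ℝ) < (d : ℝ) / 2 := by
    have : (3 : ℝ) ≤ d := by exact_mod_cast hd
    linarith
  have hm : 1 ≤ d * n := Nat.mul_pos (by omega) hn
  have h := Lam_repr hA (Ls d) (Ls_moment d (by omega)) (d * n) (4 * k) hm
    (kG d n k) (Hpol_natDegree _ _ _)
  have h0 : (kG d n k).eval 0 = 1 := Hpol_eval_zero _ _ _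
  rw [h0, one_mul] at h
  exact h

lemma kernel_amgm (hd : 3 ≤ d) (hn : 1 ≤ n) (x : Sph d) (W : Sph d → ℝ) (hW : Continuous W) :
    ∫ y, |(kQ d n k).eval (sv x y)| * W y ∂sphMeasure d ≤
      (kI d n k + ∫ y, W y ^ 2 ∂sphMeasure d) / 2 := by
  have hi1 : Integrable (fun y => (kQ d n k * kQ d n k).eval (sv x y)) (sphMeasure d) :=
    cint (cont_svpoly x _)
  have hi2 : Integrable (fun y => W y ^ 2) (sphMeasure d) := cint (hW.pow 2)
  rw [← kQ_sq d n k hd hn, ← Ls_apply d x, ← integral_add hi1 hi2, ← integral_div]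
  have hc := cont_svpoly x (kQ d n k)
  have hc2 := cont_svpoly x (kQ d n k * kQ d n k)
  refine integral_mono (cint (hc.abs.mul hW)) (cint ((hc2.add (hW.pow 2)).div_const 2)) fun y => ?_
  simp only [Polynomial.eval_mul]
  nlinarith [sq_nonneg (|(kQ d n k).eval (sv x y)| - W y), sq_abs ((kQ d n k).eval (sv x y))]

/-- Absolute constant. -/
def tau : ℕ := ⌈5 * Real.exp 23⌉₊ + 1

lemma tau_ge : 5 * Real.exp 23 ≤ tau := by
  unfold tau
  push_cast
  linarith [Nat.le_ceil (5 * Real.exp 23)]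

lemma tau_pos : 1 ≤ tau := by unfold tau; omega

/-- Near-field weight. -/
def w1 (x y : Sph d) : ℝ := Real.exp (10 * d) * (1 - sv x y) ^ (d * n ^ 2 * (2 * tau ^ 2))

/-- Far-field weight. -/
def w2 (x y : Sph d) : ℝ := (4 * (n : ℝ) ^ 2 * sv x y) ^ (2 * k) * |(kG d n k).eval (sv x y)|

lemma w1_cont (x : Sph d) : Continuous (w1 d n x) := by
  unfold w1
  exact continuous_const.mul ((continuous_const.sub (sv_cont x)).pow _)

lemma w2_cont (x : Sph d) : Continuous (w2 d n k x) := by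
  unfold w2
  exact ((continuous_const.mul (sv_cont x)).pow _).mul (cont_svpoly x _).abs

lemma w1_nonneg (x y : Sph d) : 0 ≤ w1 d n x y := by
  unfold w1
  have := sv_le_one x y
  have h : 0 ≤ 1 - sv x y := by linarith
  positivity

lemma w2_nonneg (x y : Sph d) : 0 ≤ w2 d n k x y := by
  unfold w2
  have := sv_nonneg x y
  positivity

lemma w1_int (hd : 3 ≤ d) (hn : 1 ≤ n) (hk : k ≤ n) (x : Sph d) :
    ∫ y, w1 d n x y ^ 2 ∂sphMeasure d ≤ kI d n k := by
  have hd' : (3 : ℝ) ≤ d := by exact_mod_cast hd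
  have hn' : (1 : ℝ) ≤ n := by exact_mod_cast hn
  have ht' : (1 : ℝ) ≤ tau := by exact_mod_cast tau_pos
  set j := d * n ^ 2 * (2 * tau ^ 2) with hj
  have e : ∀ y, w1 d n x y ^ 2 = Real.exp (10 * d) ^ 2 *
      ((1 - Polynomial.X : Polynomial ℝ) ^ (2 * j)).eval (sv x y) := by
    intro y
    simp only [w1, Polynomial.eval_pow, Polynomial.eval_sub, Polynomial.eval_one,
      Polynomial.eval_X, mul_pow, ← hj]
    rw [← pow_mul, mul_comm j 2]
  simp_rw [e]
  rw [integral_const_mul, Ls_apply, Ls_one_sub d (by omega)]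
  have h1 := poch_ratio_le (A := (d : ℝ) / 2) (by linarith) (2 * j)
  have hI := kI_pos d n k hd
  have h2 : 1 / kI d n k ≤ (5 * Real.exp 3 * n) ^ d := by
    apply inv_Ival_le d n _ (by omega) hn
    nlinarith
  have h3 : (2 * ((d : ℝ) / 2) / (2 * ((d : ℝ) / 2) + (2 * j : ℕ))) ^ ((d : ℝ) / 2) ≤
      (1 / (2 * n * tau)) ^ d := by
    have h4 : 2 * ((d : ℝ) / 2) / (2 * ((d : ℝ) / 2) + (2 * j : ℕ)) ≤ (1 / (2 * n * tau)) ^ 2 := by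
      rw [div_pow, div_le_div_iff₀ (by positivity) (by positivity), hj]
      push_cast
      nlinarith
    calc _ ≤ ((1 / (2 * n * tau) : ℝ) ^ 2) ^ ((d : ℝ) / 2) := by
          apply Real.rpow_le_rpow (by positivity) h4 (by positivity)
      _ = _ := by
        rw [← Real.rpow_natCast _ 2, ← Real.rpow_mul (by positivity), ← Real.rpow_natCast]
        congr 1
        push_cast; ring
  have h5 : Real.exp (10 * d) ^ 2 = Real.exp 20 ^ d := by
    rw [← Real.exp_nat_mul, ← Real.exp_nat_mul]
    congr 1; push_cast; ring
  have h6 : Real.exp 20 ^ d * (1 / (2 * n * tau)) ^ d * (5 * Real.exp 3 * n) ^ d ≤ 1 := by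
    rw [← mul_pow, ← mul_pow]
    apply pow_le_one₀ (by positivity)
    have e3 : Real.exp 20 * (1 / (2 * n * tau)) * (5 * Real.exp 3 * n) =
        5 * Real.exp 23 / (2 * tau) := by
      have : Real.exp 23 = Real.exp 20 * Real.exp 3 := by rw [← Real.exp_add]; norm_num
      rw [this]; field_simp
    rw [e3, div_le_one (by positivity)]
    linarith [tau_ge]
  rw [h5]
  have h7 : 1 ≤ (5 * Real.exp 3 * n) ^ d * kI d n k := by
    rwa [div_le_iff₀ hI] at h2
  calc _ ≤ Real.exp 20 ^ d * (1 / (2 * n * tau)) ^ d := by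
        gcongr
        exact h1.trans h3
    _ ≤ Real.exp 20 ^ d * (1 / (2 * n * tau)) ^ d * ((5 * Real.exp 3 * n) ^ d * kI d n k) :=
        le_mul_of_one_le_right (by positivity) h7
    _ = (Real.exp 20 ^ d * (1 / (2 * n * tau)) ^ d * (5 * Real.exp 3 * n) ^ d) * kI d n k := by ring
    _ ≤ 1 * kI d n k := by gcongr
    _ = _ := one_mul _

/-- Constant for the far field. -/
def cfar : ℝ := (1 + 2 * (4 * k : ℕ)) ^ (2 * (4 * k)) * 4 ^ k

lemma w2_int (hd : 3 ≤ d) (hn : 1 ≤ n) (x : Sph d) :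
    ∫ y, w2 d n k x y ^ 2 ∂sphMeasure d ≤ cfar k * kI d n k := by
  have hd' : (3 : ℝ) ≤ d := by exact_mod_cast hd
  have hn' : (1 : ℝ) ≤ n := by exact_mod_cast hn
  have hA : (0 : ℝ) < (d : ℝ) / 2 := by linarith
  have hm : 1 ≤ d * n := Nat.mul_pos (by omega) hn
  have e : ∀ y, w2 d n k x y ^ 2 = (4 * (n : ℝ) ^ 2) ^ (4 * k) *
      (kG d n k * Polynomial.X ^ (4 * k) * kG d n k).eval (sv x y) := by
    intro y
    simp only [w2, Polynomial.eval_pow, Polynomial.eval_mul, Polynomial.eval_X]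
    rw [mul_pow, sq_abs, ← pow_mul, mul_pow]
    ring
  simp_rw [e]
  rw [integral_const_mul, Ls_apply, kG_sq d n k hd hn]
  have h1 := Ival_ratio hA (d * n) (4 * k) hm
  have h2 := Ival_steps hA (d * n) k (by push_cast; nlinarith)
  have hI := kI_pos d n k hd
  have hIdef : Ival ((d : ℝ) / 2) (d * n + k) 0 = kI d n k := rfl
  rw [hIdef] at h2
  have h0 := Ival_pos hA (d * n) 0
  calc _ ≤ (4 * (n : ℝ) ^ 2) ^ (4 * k) * ((((d : ℝ) / 2 + (4 * k : ℕ)) / (d * n : ℕ)) ^ (2 * (4 * k)) *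
        (4 ^ k * kI d n k)) := by
        gcongr
        exact h1.trans (by gcongr)
    _ = (2 * n * (((d : ℝ) / 2 + (4 * k : ℕ)) / (d * n : ℕ))) ^ (2 * (4 * k)) *
        (4 ^ k * kI d n k) := by
        rw [mul_pow (2 * (n : ℝ)), pow_mul (2 * (n : ℝ)) 2, mul_pow 2 (n : ℝ) 2]
        norm_num
        ring
    _ ≤ (1 + 2 * (4 * k : ℕ)) ^ (2 * (4 * k)) * (4 ^ k * kI d n k) := by
        gcongr
        have : 2 * n * (((d : ℝ) / 2 + (4 * k : ℕ)) / (d * n : ℕ)) = (d + 2 * (4 * k : ℕ)) / d := by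
          push_cast
          field_simp
        rw [this, div_le_iff₀ (by positivity)]
        have : (0 : ℝ) ≤ (4 * k : ℕ) := by positivity
        nlinarith
    _ = _ := by unfold cfar; ring

lemma kernel_bound (hd : 3 ≤ d) (hn : 1 ≤ n) (hk : k ≤ n) (x : Sph d) (F : Sph d → ℝ)
    (hF : Continuous F) (D : ℝ) (hD : 0 ≤ D)
    (hFD : ∀ y, |F y| * |(kG d n k).eval (sv x y)| ≤ D * (w1 d n x y + w2 d n k x y)) :
    |∫ y, F y * (kQ d n k * kG d n k).eval (sv x y) ∂sphMeasure d| ≤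
      D * (2 + cfar k) * kI d n k := by
  have hI := kI_pos d n k hd
  have hcf : 0 ≤ cfar k := by unfold cfar; positivity
  have hc := (cont_svpoly x (kQ d n k)).abs
  have hi1 : Integrable (fun y => |(kQ d n k).eval (sv x y)| * w1 d n x y) (sphMeasure d) :=
    cint (hc.mul (w1_cont d n x))
  have hi2 : Integrable (fun y => |(kQ d n k).eval (sv x y)| * w2 d n k x y) (sphMeasure d) :=
    cint (hc.mul (w2_cont d n k x))
  have a1 := kernel_amgm d n k hd hn x _ (w1_cont d n x)
  have a2 := kernel_amgm d n k hd hn x _ (w2_cont d n k x)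
  have b1 := w1_int d n k hd hn hk x
  have b2 := w2_int d n k hd hn x
  calc _ ≤ ∫ y, |F y * (kQ d n k * kG d n k).eval (sv x y)| ∂sphMeasure d :=
        abs_integral_le_integral_abs
    _ ≤ ∫ y, D * (|(kQ d n k).eval (sv x y)| * w1 d n x y +
          |(kQ d n k).eval (sv x y)| * w2 d n k x y) ∂sphMeasure d := by
        refine integral_mono (cint (hF.mul (cont_svpoly x _)).abs)
          ((hi1.add hi2).const_mul D) fun y => ?_
        simp only [Polynomial.eval_mul, abs_mul]
        have h1 := hFD y
        have h2 := abs_nonneg ((kQ d n k).eval (sv x y))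
        calc _ = |(kQ d n k).eval (sv x y)| * (|F y| * |(kG d n k).eval (sv x y)|) := by ring
          _ ≤ |(kQ d n k).eval (sv x y)| * (D * (w1 d n x y + w2 d n k x y)) := by gcongr
          _ = _ := by ring
    _ = D * ((∫ y, |(kQ d n k).eval (sv x y)| * w1 d n x y ∂sphMeasure d) +
          ∫ y, |(kQ d n k).eval (sv x y)| * w2 d n k x y ∂sphMeasure d) := by
        rw [integral_const_mul, integral_add hi1 hi2]
    _ ≤ D * ((2 + cfar k) * kI d n k) := by
        gcongr
        nlinarith
    _ = _ := by ring

lemma kG_near (hd : 3 ≤ d) (hn : 1 ≤ n) (hk : 4 * k ≤ d * n) (x y : Sph d)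
    (hs : sv x y * (2 * tau ^ 2 * n ^ 2) ≤ 1) :
    |(kG d n k).eval (sv x y)| ≤ w1 d n x y := by
  have hd' : (3 : ℝ) ≤ d := by exact_mod_cast hd
  have hn' : (1 : ℝ) ≤ n := by exact_mod_cast hn
  have ht' : (1 : ℝ) ≤ tau := by exact_mod_cast tau_pos
  have hk' : ((4 * k : ℕ) : ℝ) ≤ d * n := by exact_mod_cast hk
  have hA : (0 : ℝ) < (d : ℝ) / 2 := by linarith
  set s := sv x y with hsdef
  have hs0 : 0 ≤ s := sv_nonneg x y
  set T : ℝ := 2 * tau ^ 2 with hT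
  have hT2 : 2 ≤ T := by rw [hT]; nlinarith
  have hTn : 2 ≤ T * n ^ 2 := by nlinarith
  have hsn : s * n ^ 2 ≤ 1 / 2 := by nlinarith [mul_nonneg hs0 (sq_nonneg (n : ℝ))]
  have hs12 : s ≤ 1 / 2 := by nlinarith
  have h1 := Hpol_bound hA (d * n) (4 * k) hs0
  have h2 : ((d * n : ℕ) : ℝ) * (2 * (d * n : ℕ) + 2 * ((d : ℝ) / 2) + (4 * k : ℕ)) * s /
      ((d : ℝ) / 2 + (4 * k : ℕ) + 1) ≤ 8 * d := by
    have hR : (0 : ℝ) ≤ (4 * k : ℕ) := by positivity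
    rw [div_le_iff₀ (by positivity)]
    push_cast at hk' hR ⊢
    have hdn : (d : ℝ) ≤ d * n := by nlinarith
    calc (d : ℝ) * n * (2 * (d * n) + 2 * ((d : ℝ) / 2) + 4 * k) * s ≤
        (d : ℝ) * n * (4 * (d * n)) * s := by gcongr; linarith
      _ = 4 * d ^ 2 * (s * n ^ 2) := by ring
      _ ≤ 4 * d ^ 2 * (1 / 2) := by gcongr
      _ ≤ 8 * d * ((d : ℝ) / 2 + 4 * k + 1) := by nlinarith
  have h3 : Real.exp (-(2 * d)) ≤ (1 - s) ^ (d * n ^ 2 * (2 * tau ^ 2)) := by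
    have h4 : Real.exp (-(2 * s)) ≤ 1 - s := by
      have h5 := Real.add_one_le_exp (2 * s)
      rw [Real.exp_neg, inv_le_comm₀ (Real.exp_pos _) (by linarith)]
      refine le_trans ?_ h5
      rw [inv_le_iff_one_le_mul₀ (by linarith)]
      nlinarith
    calc Real.exp (-(2 * d)) ≤ Real.exp (-(2 * s)) ^ (d * n ^ 2 * (2 * tau ^ 2)) := by
          rw [← Real.exp_nat_mul]
          apply Real.exp_le_exp.2
          push_cast
          have : (d : ℝ) * n ^ 2 * (2 * tau ^ 2) * s ≤ d := by
            calc _ = d * (s * (T * n ^ 2)) := by rw [hT]; ring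
              _ ≤ d * 1 := by gcongr
              _ = d := mul_one _
          linarith
      _ ≤ _ := by gcongr
  calc |(kG d n k).eval s| ≤ _ := h1
    _ ≤ Real.exp (8 * d) := Real.exp_le_exp.2 h2
    _ = Real.exp (10 * d) * Real.exp (-(2 * d)) := by rw [← Real.exp_add]; ring_nf
    _ ≤ w1 d n x y := by
      unfold w1
      gcongr
end kernel

/-- Growth constant. -/
def Ckc (k : ℕ) : ℝ := 1 + (2 * k + 1) * (8 * (k : ℝ)) ^ (2 * k)

/-- Pointwise constant. -/
def D0c (r : ℝ) (k : ℕ) : ℝ := 2 ^ r + (2 * (tau : ℝ) ^ 2) ^ (4 * k) + Ckc k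

lemma Ckc_pos (k : ℕ) : 0 < Ckc k := by unfold Ckc; positivity

lemma D0c_pos (r : ℝ) (k : ℕ) : 0 < D0c r k := by
  have := Ckc_pos k
  unfold D0c; positivity

lemma abs_sub_le_abs_add_abs' (a b : ℝ) : |a - b| ≤ |a| + |b| := by
  simpa [sub_eq_add_neg] using abs_add_le a (-b)

set_option maxHeartbeats 2000000 in
lemma pt_bound (d n k : ℕ) (r : ℝ) (hr : 0 < r) (hd : 3 ≤ d) (hn : 1 ≤ n) (hk1 : 1 ≤ k)
    (hrk : r ≤ k) (hkn : 4 * k ≤ n) (δ S L : ℝ) (hδ : 0 < δ) (hδn : 1 ≤ δ ^ 2 * n)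
    (hS : 0 ≤ S) (hL : 0 ≤ L) (f : Sph d → ℝ) (hf : ∀ y, |f y| ≤ S) (x : Sph d)
    (P : MvPolynomial (Fin (d + 1)) ℝ) (hPd : P.totalDegree ≤ k)
    (hP : ∀ y : Sph d, dist x y ≤ δ →
      |f y - MvPolynomial.eval (fun i => (y : EuclideanSpace ℝ (Fin (d + 1))) i) P| ≤
        L * dist x y ^ r) (y : Sph d) :
    |f y - MvPolynomial.eval (fun i => (y : EuclideanSpace ℝ (Fin (d + 1))) i) P| *
      |(kG d n k).eval (sv x y)| ≤
      (D0c r k * (n : ℝ) ^ (-r) * (S + L)) * (w1 d n x y + w2 d n k x y) := by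
  have hn' : (1 : ℝ) ≤ n := by exact_mod_cast hn
  have hn0 : (0 : ℝ) < n := by linarith
  have ht' : (1 : ℝ) ≤ tau := by exact_mod_cast tau_pos
  have hk4 : 4 * k ≤ d * n := hkn.trans (Nat.le_mul_of_pos_left n (by omega))
  have hw1 := w1_nonneg d n x y
  have hw2 := w2_nonneg d n k x y
  have hCk := Ckc_pos k
  set N : ℝ := (n : ℝ) ^ (-r) with hN
  have hNpos : 0 < N := by positivity
  set F := |f y - MvPolynomial.eval (fun i => (y : EuclideanSpace ℝ (Fin (d + 1))) i) P| with hF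
  have hF0 : 0 ≤ F := abs_nonneg _
  set ρ := dist x y with hρ
  have hρ0 : 0 ≤ ρ := dist_nonneg
  have hsv : ρ ^ 2 = 4 * sv x y := dist_sq_sv x y
  have hs0 := sv_nonneg x y
  set T : ℝ := 2 * (tau : ℝ) ^ 2 with hT
  have hT2 : 2 ≤ T := by rw [hT]; nlinarith
  have hSL : 0 ≤ S + L := by linarith
  set X : ℝ := (4 * (n : ℝ) ^ 2 * sv x y) ^ (2 * k) with hX
  have hX0 : 0 ≤ X := by positivity
  have h2r : (0 : ℝ) < 2 ^ r := by positivity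
  have hTk : 0 < T ^ (4 * k) := by positivity
  have hDdef : D0c r k = 2 ^ r + T ^ (4 * k) + Ckc k := rfl
  have hD := D0c_pos r k
  have hXe : X = ((n : ℝ) * ρ) ^ (4 * k) := by
    have e : (4 * (n : ℝ) ^ 2 * sv x y) = ((n : ℝ) * ρ) ^ 2 := by rw [mul_pow, hsv]; ring
    rw [hX, e, ← pow_mul]
    congr 1; ring
  have far : F ≤ (D0c r k * N * (S + L)) * X →
      F * |(kG d n k).eval (sv x y)| ≤ (D0c r k * N * (S + L)) * (w1 d n x y + w2 d n k x y) := by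
    intro h
    calc F * |(kG d n k).eval (sv x y)| ≤
        (D0c r k * N * (S + L)) * X * |(kG d n k).eval (sv x y)| := by gcongr
      _ = (D0c r k * N * (S + L)) * w2 d n k x y := by unfold w2; ring
      _ ≤ _ := by
        gcongr
        linarith
  by_cases hρδ : ρ ≤ δ
  · have hFL : F ≤ L * ρ ^ r := hP y hρδ
    by_cases hs : sv x y * (2 * tau ^ 2 * n ^ 2) ≤ 1
    · have hg := kG_near d n k hd hn hk4 x y hs
      have hρn : ρ ≤ 2 / n := by
        apply le_of_sq_le_sq _ (by positivity)
        rw [div_pow, le_div_iff₀ (by positivity), hsv]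
        have : 0 ≤ sv x y * n ^ 2 := by positivity
        have e : sv x y * (2 * tau ^ 2 * n ^ 2) = T * (sv x y * n ^ 2) := by rw [hT]; ring
        rw [e] at hs
        nlinarith
      have h1 : ρ ^ r ≤ 2 ^ r * N := by
        calc ρ ^ r ≤ (2 / (n : ℝ)) ^ r := Real.rpow_le_rpow hρ0 hρn hr.le
          _ = _ := by rw [Real.div_rpow (by norm_num) hn0.le, hN, Real.rpow_neg hn0.le]; rfl
      calc F * |(kG d n k).eval (sv x y)| ≤ (L * (2 ^ r * N)) * w1 d n x y := by
            gcongr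
            exact hFL.trans (by gcongr)
        _ ≤ (D0c r k * N * (S + L)) * (w1 d n x y + w2 d n k x y) := by
            have : L * (2 ^ r * N) ≤ D0c r k * N * (S + L) := by
              calc L * (2 ^ r * N) = 2 ^ r * N * L := by ring
                _ ≤ _ := by gcongr <;> linarith
            gcongr
            linarith
    · apply far
      push Not at hs
      have hb : 1 ≤ T * (n * ρ) := by
        apply le_of_sq_le_sq _ (by positivity)
        have e : sv x y * (2 * tau ^ 2 * n ^ 2) = T * (sv x y * n ^ 2) := by rw [hT]; ring
        rw [e] at hs
        rw [mul_pow T, mul_pow _ ρ, hsv]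
        have h5 : 1 ≤ T * (T * (sv x y * n ^ 2)) := by nlinarith
        nlinarith
      have h1 : ρ ^ r ≤ N * (T ^ (4 * k) * X) := by
        have h2 : ((n : ℝ) * ρ) ^ r ≤ T ^ (4 * k) * X := by
          have hnr : 0 ≤ (n : ℝ) * ρ := by positivity
          calc ((n : ℝ) * ρ) ^ r ≤ (T * (n * ρ)) ^ r :=
                Real.rpow_le_rpow hnr (by nlinarith) hr.le
            _ ≤ (T * (n * ρ)) ^ ((4 * k : ℕ) : ℝ) := by
                apply Real.rpow_le_rpow_of_exponent_le hb
                push_cast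
                have : (0 : ℝ) ≤ k := by positivity
                linarith
            _ = _ := by rw [Real.rpow_natCast, mul_pow, hXe]
        calc ρ ^ r = N * ((n : ℝ) * ρ) ^ r := by
              rw [Real.mul_rpow hn0.le hρ0, hN, Real.rpow_neg hn0.le, ← mul_assoc,
                inv_mul_cancel₀ (by positivity), one_mul]
          _ ≤ _ := by gcongr
      calc F ≤ L * (N * (T ^ (4 * k) * X)) := hFL.trans (by gcongr)
        _ = T ^ (4 * k) * N * L * X := by ring
        _ ≤ _ := by gcongr <;> linarith
  · apply far
    push Not at hρδ
    have hδ0 : 0 < min δ 1 := lt_min hδ one_pos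
    have hg := growth (by omega) P k hk1 hPd x (min δ 1) (S + L) hδ0 (min_le_right _ _)
      (by
        intro z hz
        have h1 := hP z (hz.trans (min_le_left _ _))
        have h2 : dist x z ^ r ≤ 1 :=
          Real.rpow_le_one dist_nonneg (hz.trans (min_le_right _ _)) hr.le
        have h3 := hf z
        have h4 : L * dist x z ^ r ≤ L := by nlinarith
        rw [abs_le] at *
        constructor <;> linarith) y
    have hm : 1 ≤ (min δ 1) ^ 2 * n := by
      rcases min_choice δ 1 with h | h <;> rw [h]
      · exact hδn
      · linarith
    have hpow : (8 * (k : ℝ) / min δ 1) ^ (2 * k) ≤ (8 * (k : ℝ)) ^ (2 * k) * n ^ k := by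
      rw [div_pow, div_le_iff₀ (by positivity), mul_assoc]
      have : (1 : ℝ) ≤ n ^ k * min δ 1 ^ (2 * k) := by
        rw [pow_mul, ← mul_pow]
        apply one_le_pow₀
        linarith
      exact le_mul_of_one_le_right (by positivity) this
    have hnk : (1 : ℝ) ≤ n ^ k := one_le_pow₀ hn'
    have hFb : F ≤ Ckc k * (S + L) * n ^ k := by
      have h3 := hf y
      have h4 : F ≤ |f y| +
        |MvPolynomial.eval (fun i => (y : EuclideanSpace ℝ (Fin (d + 1))) i) P| := abs_sub_le_abs_add_abs' _ _
      calc F ≤ (S + L) * n ^ k + (2 * k + 1) * (S + L) * ((8 * (k : ℝ)) ^ (2 * k) * n ^ k) := by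
            refine h4.trans (add_le_add ?_ (hg.trans (by gcongr)))
            nlinarith
        _ = _ := by unfold Ckc; ring
    have hNX : (n : ℝ) ^ k ≤ N * X := by
      have h1 : (n : ℝ) ^ (2 * k) ≤ X := by
        rw [hXe, show 4 * k = 2 * (2 * k) by ring, pow_mul ((n : ℝ) * ρ) 2]
        gcongr
        have : δ ^ 2 ≤ ρ ^ 2 := by gcongr
        have : δ ^ 2 * n ≤ ρ ^ 2 * n := by gcongr
        nlinarith
      have h2 : (n : ℝ) ^ r ≤ n ^ k := by
        rw [← Real.rpow_natCast]
        exact Real.rpow_le_rpow_of_exponent_le hn' hrk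
      have h3 : N * (n : ℝ) ^ r = 1 := by
        rw [hN, Real.rpow_neg hn0.le, inv_mul_cancel₀ (by positivity)]
      calc (n : ℝ) ^ k = N * n ^ r * n ^ k := by rw [h3, one_mul]
        _ ≤ N * n ^ k * n ^ k := by gcongr
        _ = N * n ^ (2 * k) := by ring
        _ ≤ N * X := by gcongr
    calc F ≤ Ckc k * (S + L) * (N * X) := hFb.trans (by gcongr)
      _ = Ckc k * N * (S + L) * X := by ring
      _ ≤ _ := by gcongr; linarith

lemma sph_ne (d : ℕ) : Nonempty (Sph d) :=
  (NormedSpace.sphere_nonempty (E := EuclideanSpace ℝ (Fin (d + 1)))).2 zero_le_one |>.to_subtype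

lemma bestApprox_le (d : ℕ) (n : ℝ) (f g : Sph d → ℝ) (hg : IsSphPoly d n g) (t : ℝ)
    (h : ∀ y, |f y - g y| ≤ t) : bestApprox d n f ≤ t := by
  refine csInf_le ⟨0, ?_⟩ ⟨g, hg, h⟩
  rintro s ⟨g', -, h'⟩
  obtain ⟨y⟩ := sph_ne d
  exact (abs_nonneg _).trans (h' y)

lemma abs_le_supNorm {d : ℕ} (f : Sph d → ℝ) (hf : Continuous f) (y : Sph d) :
    |f y| ≤ supNorm f :=
  le_csSup (isCompact_range hf.abs).bddAbove ⟨y, rfl⟩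

lemma big_n (d n k : ℕ) (r : ℝ) (hr : 0 < r) (hd : 3 ≤ d) (hn : 1 ≤ n) (hk1 : 1 ≤ k)
    (hrk : r ≤ k) (hkn : 4 * k ≤ n) (δ L : ℝ) (hδ : 0 < δ) (hδn : 1 ≤ δ ^ 2 * n)
    (hk' : ∀ m : ℕ, (m : ℝ) < r → m ≤ k)
    (hL : 0 ≤ L) (f : Sph d → ℝ) (hf : Continuous f)
    (hP : ∀ x : Sph d, ∃ P, IsSphPoly d r P ∧
          ∀ y ∈ Metric.closedBall x δ, |f y - P y| ≤ L * dist x y ^ r) :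
    bestApprox d ((2 * (d + 2) * n : ℕ) : ℝ) f ≤
      D0c r k * (2 + cfar k) * (n : ℝ) ^ (-r) * (supNorm f + L) := by
  have hI := kI_pos d n k hd
  have hfS := abs_le_supNorm f hf
  have hS : 0 ≤ supNorm f := by
    obtain ⟨y⟩ := sph_ne d
    exact (abs_nonneg _).trans (hfS y)
  obtain ⟨Q, hQd, hQ⟩ := conv_poly d f hf (kQ d n k * kG d n k)
  refine bestApprox_le d _ f (fun y => MvPolynomial.eval
    (fun i => (y : EuclideanSpace ℝ (Fin (d + 1))) i) (MvPolynomial.C (kI d n k)⁻¹ * Q))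
    ⟨_, ?_, fun y => rfl⟩ _ ?_
  · have h1 : (MvPolynomial.C (kI d n k)⁻¹ * Q).totalDegree ≤ Q.totalDegree := by
      refine (MvPolynomial.totalDegree_mul _ _).trans ?_
      rw [MvPolynomial.totalDegree_C, zero_add]
    have h2 : (kQ d n k * kG d n k).natDegree ≤ (d * n + k) + d * n :=
      Polynomial.natDegree_mul_le.trans
        (add_le_add (Hpol_natDegree _ _ _) (Hpol_natDegree _ _ _))
    have h3 : (d * n + k) + d * n < 2 * (d + 2) * n := by
      have : 2 * (d + 2) * n = d * n + d * n + 4 * n := by ring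
      omega
    exact_mod_cast (h1.trans (hQd.trans h2)).trans_lt h3
  · intro x
    obtain ⟨_, ⟨P, hPd, hPe⟩, hPf⟩ := hP x
    have hPf' : ∀ y : Sph d, dist x y ≤ δ →
      |f y - MvPolynomial.eval (fun i => (y : EuclideanSpace ℝ (Fin (d + 1))) i) P| ≤
        L * dist x y ^ r := by
      intro y hy
      rw [← hPe]
      exact hPf y (by rwa [Metric.mem_closedBall, dist_comm])
    have hxx : MvPolynomial.eval (fun i => (x : EuclideanSpace ℝ (Fin (d + 1))) i) P = f x := by
      have := hPf' x (by rw [dist_self]; exact hδ.le)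
      rw [dist_self, Real.zero_rpow hr.ne', mul_zero] at this
      have := abs_nonpos_iff.1 this
      linarith
    have hPk := hk' _ hPd
    have key := kernel_bound d n k hd hn (by omega) x
      (fun y => f y - MvPolynomial.eval (fun i => (y : EuclideanSpace ℝ (Fin (d + 1))) i) P)
      (hf.sub (cont_mv P)) (D0c r k * (n : ℝ) ^ (-r) * (supNorm f + L))
      (by have := D0c_pos r k; positivity)
      (pt_bound d n k r hr hd hn hk1 hrk hkn δ (supNorm f) L hδ hδn hS hL f hfS x P hPk hPf')
    obtain ⟨p, hp1, hp2, hp3⟩ := zonal d (by omega) x P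
    have e1 : ∫ y, (f y - MvPolynomial.eval (fun i => (y : EuclideanSpace ℝ (Fin (d + 1))) i) P) *
        (kQ d n k * kG d n k).eval (sv x y) ∂sphMeasure d =
        MvPolynomial.eval (fun i => (x : EuclideanSpace ℝ (Fin (d + 1))) i) Q -
          f x * kI d n k := by
      rw [hQ x, ← hxx, ← hp2, ← kernel_repr d n k hd hn p (hp1.trans hPk), ← hp3]
      have i1 : Integrable (fun y => f y * (kQ d n k * kG d n k).eval (sv x y)) (sphMeasure d) :=
        cint (hf.mul (cont_svpoly x _))
      have i2 : Integrable (fun y : Sph d =>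
          MvPolynomial.eval (fun i => (y : EuclideanSpace ℝ (Fin (d + 1))) i) P *
          (kQ d n k * kG d n k).eval (sv x y)) (sphMeasure d) :=
        cint ((cont_mv P).mul (cont_svpoly x _))
      rw [← integral_sub i1 i2]
      congr 1; ext y; ring
    rw [e1] at key
    rw [map_mul, MvPolynomial.eval_C, abs_sub_comm]
    have e2 : (kI d n k)⁻¹ * MvPolynomial.eval (fun i => (x : EuclideanSpace ℝ (Fin (d + 1))) i) Q
        - f x = (MvPolynomial.eval (fun i => (x : EuclideanSpace ℝ (Fin (d + 1))) i) Q -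
          f x * kI d n k) / kI d n k := by
      field_simp
    rw [e2, abs_div, abs_of_pos hI, div_le_iff₀ hI]
    refine key.trans (le_of_eq ?_)
    ring

/-- Global degree of approximation for functions in the smoothness class `W_{d;r}`
(uniform local polynomial approximation constant `L` on caps of radius `δ`):
`E_{d;2(d+2)n}(f) ≲ d^{1/6} dim(Π_{2(d+2)n}^d)^{−r/d} ‖f‖_{d;r}`. -/
theorem global_smooth_approx :
    ∀ r : ℝ, 0 < r → ∃ C : ℝ, 0 < C ∧
      ∀ (d : ℕ) (δ : ℝ) (f : Sph d → ℝ) (L : ℝ) (n : ℕ),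
        3 ≤ d → 0 < δ → Continuous f → 0 ≤ L →
        (∀ x : Sph d, ∃ P, IsSphPoly d r P ∧
          ∀ y ∈ Metric.closedBall x δ, |f y - P y| ≤ L * dist x y ^ r) →
        2 * (d + 1) ≤ n → ((d : ℝ) + r + 1) ^ 2 ≤ (d : ℝ) * n →
        Real.sqrt (16 * r * Real.log n / n) ≤ δ →
        bestApprox d ((2 * (d + 2) * n : ℕ) : ℝ) f ≤
          C * (d : ℝ) ^ ((1 : ℝ)/6) * dimPi d (2 * (d + 2) * n) ^ (-(r / (d : ℝ))) *
            (supNorm f + L) := by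
  intro r hr
  set k : ℕ := ⌈r⌉₊ with hk
  have hk1 : 1 ≤ k := Nat.ceil_pos.2 hr
  have hrk : r ≤ k := Nat.le_ceil r
  have hk' : ∀ m : ℕ, (m : ℝ) < r → m ≤ k := fun m hm => by
    exact_mod_cast (hm.trans_le hrk).le
  set n0 : ℕ := 4 * k + ⌈Real.exp (1 / (16 * r))⌉₊ with hn0
  have hD := D0c_pos r k
  have hcf : 0 ≤ cfar k := by unfold cfar; positivity
  refine ⟨(30 * (n0 : ℝ)) ^ r + D0c r k * (2 + cfar k) * 30 ^ r, by positivity, ?_⟩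
  intro d δ f L n hd hδ hf hL hP hn _ hsq
  have hn1 : 1 ≤ n := by omega
  have hn1' : (1 : ℝ) ≤ n := by exact_mod_cast hn1
  have hnpos : (0 : ℝ) < n := by linarith
  have hfS := abs_le_supNorm f hf
  have hS : 0 ≤ supNorm f := by
    obtain ⟨y⟩ := sph_ne d
    exact (abs_nonneg _).trans (hfS y)
  have hSL : 0 ≤ supNorm f + L := by linarith
  have hdim := dimPi_rpow d n r hr hd hn1
  have hd1 : (1 : ℝ) ≤ (d : ℝ) ^ ((1 : ℝ) / 6) :=
    Real.one_le_rpow (by exact_mod_cast (by omega : 1 ≤ d)) (by norm_num)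
  set C := (30 * (n0 : ℝ)) ^ r + D0c r k * (2 + cfar k) * 30 ^ r with hC
  have hC0 : 0 < C := by positivity
  suffices h : bestApprox d ((2 * (d + 2) * n : ℕ) : ℝ) f ≤
      C * (30 * (n : ℝ)) ^ (-r) * (supNorm f + L) by
    refine h.trans ?_
    gcongr
    exact le_mul_of_one_le_right hC0.le hd1
  have hsplit : (30 * (n : ℝ)) ^ (-r) * 30 ^ r = (n : ℝ) ^ (-r) := by
    rw [Real.mul_rpow (by norm_num) hnpos.le, Real.rpow_neg (by norm_num : (0:ℝ) ≤ 30)]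
    have : (0 : ℝ) < 30 ^ r := by positivity
    field_simp
  by_cases hnn : n0 ≤ n
  · have hkn : 4 * k ≤ n := by omega
    have hexp : Real.exp (1 / (16 * r)) ≤ n := by
      refine (Nat.le_ceil _).trans ?_
      exact_mod_cast (by omega : ⌈Real.exp (1 / (16 * r))⌉₊ ≤ n)
    have hlog : 1 ≤ 16 * r * Real.log n := by
      have := (Real.le_log_iff_exp_le hnpos).2 hexp
      rw [div_le_iff₀ (by positivity)] at this
      linarith
    have hδn : 1 ≤ δ ^ 2 * n := by
      have h1 := (Real.sqrt_le_left hδ.le).1 hsq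
      rw [div_le_iff₀ hnpos] at h1
      linarith
    refine (big_n d n k r hr hd hn1 hk1 hrk hkn δ L hδ hδn hk' hL f hf hP).trans ?_
    refine mul_le_mul_of_nonneg_right ?_ hSL
    rw [hC, ← hsplit]
    have : 0 ≤ (30 * (n0 : ℝ)) ^ r * (30 * (n : ℝ)) ^ (-r) := by positivity
    nlinarith
  · push Not at hnn
    have h1 : bestApprox d ((2 * (d + 2) * n : ℕ) : ℝ) f ≤ supNorm f := by
      refine bestApprox_le d _ f (fun _ => 0) ⟨0, ?_, fun y => by simp⟩ _ fun y => ?_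
      · rw [MvPolynomial.totalDegree_zero]
        exact_mod_cast (by positivity : 0 < 2 * (d + 2) * n)
      · simpa using hfS y
    have h2 : 1 ≤ C * (30 * (n : ℝ)) ^ (-r) := by
      rw [Real.rpow_neg (by positivity), ← div_eq_mul_inv, one_le_div (by positivity)]
      have h3 : (30 * (n : ℝ)) ^ r ≤ (30 * (n0 : ℝ)) ^ r := by
        apply Real.rpow_le_rpow (by positivity) _ hr.le
        have : (n : ℝ) ≤ n0 := by exact_mod_cast hnn.le
        linarith
      have : 0 ≤ D0c r k * (2 + cfar k) * 30 ^ r := by positivity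
      linarith
    nlinarith
end
end

section
/- Let r ≥ 1 be an integer, let R be a (real) trigonometric polynomial of order at most r, and let 0 < γ < γ₁ ≤ π/2. If max_{t ∈ [−2γ, 2γ]} |R(t)| = 1, then max_{t ∈ [−2γ₁, 2γ₁]} |R(t)| ≤ (2 sin γ₁ / sin γ)^{2r} ≤ (π γ₁ / γ)^{2r}. -/
noncomputable section

open MeasureTheory Real Set
open scoped RealInnerProductSpace

/-- `R` is a (real) trigonometric polynomial of order at most `r`. -/
def IsTrigPoly (r : ℕ) (R : ℝ → ℝ) : Prop :=
  ∃ a b : ℕ → ℝ, ∀ t : ℝ,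
    R t = a 0 + ∑ k ∈ Finset.range r,
      (a (k + 1) * Real.cos ((k + 1) * t) + b (k + 1) * Real.sin ((k + 1) * t))

section WalshHelpers

open Polynomial

lemma walsh_compare (n : ℕ) (v : ℕ → ℝ) (hv : ∀ i j, i < j → j ≤ n → v j < v i)
    (P W : ℝ[X]) (hP : P.natDegree ≤ n) (hW : W.natDegree ≤ n)
    (h : ∀ j ≤ n, |P.eval (v j)| ≤ (-1) ^ j * W.eval (v j)) (x : ℝ)
    (hx : ∀ j ≤ n, v j < x) : |P.eval x| ≤ W.eval x := by
  have hinj : Set.InjOn v (Finset.range (n + 1) : Finset ℕ) := by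
    intro i hi j hj hij
    simp only [Finset.coe_range, Set.mem_Iio] at hi hj
    rcases lt_trichotomy i j with h1 | h1 | h1
    · have := hv i j h1 (by omega); linarith
    · exact h1
    · have := hv j i h1 (by omega); linarith
  have key : ∀ Q : ℝ[X], Q.natDegree ≤ n → Q.eval x =
      ∑ i ∈ Finset.range (n + 1), Q.eval (v i) *
        (Lagrange.basis (Finset.range (n + 1)) v i).eval x := by
    intro Q hQ
    have hd : Q.degree < (Finset.range (n + 1)).card := by
      rw [Finset.card_range]
      exact lt_of_le_of_lt (degree_le_of_natDegree_le hQ) (by exact_mod_cast Nat.lt_succ_self n)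
    conv_lhs => rw [Lagrange.eq_interpolate hinj hd]
    simp [Lagrange.interpolate_apply, eval_finsetSum]
  have hs : ∀ i ≤ n, 0 ≤ (-1) ^ i * (Lagrange.basis (Finset.range (n + 1)) v i).eval x := by
    intro i hi
    have union : (Finset.range (n + 1)).erase i = (Finset.range i) ∪ Finset.Ioc i n := by grind
    have disjoint : Disjoint (Finset.range i) (Finset.Ioc i n) := by
      grind [Finset.disjoint_iff_ne]
    rw [Lagrange.basis, eval_prod, union, Finset.prod_union disjoint, ← mul_assoc]
    have e : ((-1 : ℝ)) ^ i = ∏ j ∈ Finset.range i, (-1 : ℝ) := by simp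
    rw [e, ← Finset.prod_mul_distrib]
    apply mul_nonneg <;> apply Finset.prod_nonneg
    · intro j hj
      have hj' := Finset.mem_range.mp hj
      have h1 := hv j i hj' hi
      have h2 := hx j (by omega)
      simp only [Lagrange.basisDivisor, eval_mul, eval_C, eval_sub, eval_X]
      have h3 : (v i - v j)⁻¹ < 0 := inv_lt_zero.mpr (by linarith)
      nlinarith
    · intro j hj
      have hj' := Finset.mem_Ioc.mp hj
      have h1 := hv i j hj'.1 hj'.2
      have h2 := hx j hj'.2
      simp only [Lagrange.basisDivisor, eval_mul, eval_C, eval_sub, eval_X]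
      have h3 : 0 < (v i - v j)⁻¹ := inv_pos.mpr (by linarith)
      exact mul_nonneg h3.le (by linarith)
  rw [key P hP, key W hW]
  refine (Finset.abs_sum_le_sum_abs _ _).trans (Finset.sum_le_sum fun i hi => ?_)
  have hi' : i ≤ n := by have := Finset.mem_range.mp hi; omega
  have h1 := hs i hi'
  have h2 := h i hi'
  set b := (Lagrange.basis (Finset.range (n + 1)) v i).eval x
  have h3 : |b| = (-1) ^ i * b := by
    rw [← abs_of_nonneg h1, abs_mul]; simp
  have h4 : ((-1 : ℝ) ^ i) * (-1) ^ i = 1 := by rw [← mul_pow]; simp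
  rw [abs_mul, h3]
  calc _ ≤ ((-1) ^ i * W.eval (v i)) * ((-1) ^ i * b) := by gcongr
    _ = (((-1 : ℝ) ^ i) * (-1) ^ i) * (W.eval (v i) * b) := by ring
    _ = _ := by rw [h4, one_mul]

/-- `f` equals `cos^(2r) * P(tan)` with `deg P ≤ 2r`. -/
def IsTanRep (r : ℕ) (f : ℝ → ℝ) : Prop :=
  ∃ P : ℝ[X], P.natDegree ≤ 2 * r ∧ ∀ φ : ℝ, Real.cos φ ≠ 0 →
    f φ = Real.cos φ ^ (2 * r) * P.eval (Real.tan φ)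

lemma IsTanRep.add {r : ℕ} {f g : ℝ → ℝ} (hf : IsTanRep r f) (hg : IsTanRep r g) :
    IsTanRep r (fun x => f x + g x) := by
  obtain ⟨P, hP, h1⟩ := hf
  obtain ⟨Q, hQ, h2⟩ := hg
  refine ⟨P + Q, natDegree_add_le_of_degree_le hP hQ, fun φ hφ => ?_⟩
  simp only [h1 φ hφ, h2 φ hφ, eval_add]; ring

lemma IsTanRep.const_mul {r : ℕ} {f : ℝ → ℝ} (c : ℝ) (hf : IsTanRep r f) :
    IsTanRep r (fun x => c * f x) := by
  obtain ⟨P, hP, h1⟩ := hf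
  refine ⟨C c * P, (natDegree_C_mul_le _ _).trans hP, fun φ hφ => ?_⟩
  simp only [h1 φ hφ, eval_mul, eval_C]; ring

lemma IsTanRep.mul {r s : ℕ} {f g : ℝ → ℝ} (hf : IsTanRep r f) (hg : IsTanRep s g) :
    IsTanRep (r + s) (fun x => f x * g x) := by
  obtain ⟨P, hP, h1⟩ := hf
  obtain ⟨Q, hQ, h2⟩ := hg
  refine ⟨P * Q, natDegree_mul_le.trans (by omega), fun φ hφ => ?_⟩
  simp only [h1 φ hφ, h2 φ hφ, eval_mul]; ring

lemma isTanRep_one (r : ℕ) : IsTanRep r (fun _ => 1) := by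
  refine ⟨(1 + X ^ 2) ^ r, ?_, fun φ hφ => ?_⟩
  · refine natDegree_pow_le.trans ?_
    have : (1 + X ^ 2 : ℝ[X]).natDegree ≤ 2 := by compute_degree
    nlinarith
  · simp only [eval_pow, eval_add, eval_one, eval_X]
    rw [pow_mul, ← mul_pow, Real.tan_eq_sin_div_cos]
    have : Real.cos φ ^ 2 * (1 + (Real.sin φ / Real.cos φ) ^ 2) = 1 := by
      field_simp; exact Real.cos_sq_add_sin_sq φ
    rw [this, one_pow]

lemma IsTanRep.mono {r s : ℕ} {f : ℝ → ℝ} (hf : IsTanRep r f) (h : r ≤ s) : IsTanRep s f := by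
  obtain ⟨k, rfl⟩ := Nat.exists_eq_add_of_le h
  simpa using hf.mul (isTanRep_one k)

lemma isTanRep_sum {r : ℕ} {ι : Type*} (s : Finset ι) (f : ι → ℝ → ℝ)
    (h : ∀ i ∈ s, IsTanRep r (f i)) : IsTanRep r (fun x => ∑ i ∈ s, f i x) := by
  classical
  induction s using Finset.induction_on with
  | empty => simpa using (isTanRep_one r).const_mul 0
  | insert a s ha ih =>
    simp only [Finset.sum_insert ha]
    exact (h a (by simp)).add (ih fun i hi => h i (by simp [hi]))

lemma isTanRep_cos_two : IsTanRep 1 (fun x => Real.cos (2 * x)) := by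
  refine ⟨1 - X ^ 2, by compute_degree, fun φ hφ => ?_⟩
  beta_reduce
  rw [Real.tan_eq_sin_div_cos, Real.cos_two_mul']
  simp; field_simp

lemma isTanRep_sin_two : IsTanRep 1 (fun x => Real.sin (2 * x)) := by
  refine ⟨2 * X, by compute_degree; norm_num, fun φ hφ => ?_⟩
  beta_reduce
  rw [Real.tan_eq_sin_div_cos, Real.sin_two_mul]
  simp; field_simp

lemma isTanRep_cos_sin (k : ℕ) : IsTanRep k (fun x => Real.cos (k * (2 * x))) ∧
    IsTanRep k (fun x => Real.sin (k * (2 * x))) := by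
  induction k with
  | zero => exact ⟨by simpa using isTanRep_one 0, by simpa using (isTanRep_one 0).const_mul 0⟩
  | succ k ih =>
    push_cast
    simp only [add_mul, one_mul, Real.cos_add, Real.sin_add]
    constructor
    · simpa [sub_eq_add_neg] using (ih.1.mul isTanRep_cos_two).add
        ((ih.2.mul isTanRep_sin_two).const_mul (-1))
    · exact (ih.2.mul isTanRep_cos_two).add (ih.1.mul isTanRep_sin_two)

lemma IsTanRep.of_trig {r : ℕ} {R : ℝ → ℝ} (hR : IsTrigPoly r R) :
    IsTanRep r (fun x => R (2 * x)) := by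
  obtain ⟨a, b, h⟩ := hR
  simp only [h]
  refine IsTanRep.add ?_ (isTanRep_sum _ _ fun k hk => ?_)
  · simpa using (isTanRep_one r).const_mul (a 0)
  · have hk' := Finset.mem_range.mp hk
    have := isTanRep_cos_sin (k + 1)
    push_cast at this
    exact ((this.1.mono (by omega)).const_mul _).add ((this.2.mono (by omega)).const_mul _)

lemma isTanRep_poly (r : ℕ) (q : ℝ[X]) (hq : q.natDegree ≤ r) (f : ℝ → ℝ) (hf : IsTanRep 1 f) :
    IsTanRep r (fun x => q.eval (f x)) := by
  simp only [eval_eq_sum_range]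
  refine isTanRep_sum _ _ fun k hk => IsTanRep.const_mul _ ?_
  have hk' := Finset.mem_range.mp hk
  refine IsTanRep.mono (r := k) ?_ (by omega)
  clear hk hk'
  induction k with
  | zero => simpa using isTanRep_one 0
  | succ k ih => simpa [pow_succ] using ih.mul hf

lemma chebT_le (r : ℕ) (y : ℝ) (hy : 1 ≤ y) : (Chebyshev.T ℝ r).eval y ≤ (2 * y) ^ r := by
  have h0 := Real.cosh_arcosh hy
  rw [← h0, Chebyshev.T_real_cosh]
  set θ := Real.arcosh y
  have hθ : 0 ≤ θ := Real.arcosh_nonneg hy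
  have h1 : Real.cosh (((r : ℤ) : ℝ) * θ) ≤ Real.exp (r * θ) := by
    rw [Real.cosh_eq]
    have : Real.exp (-(((r : ℤ) : ℝ) * θ)) ≤ Real.exp (r * θ) := by
      apply Real.exp_le_exp.mpr
      have : 0 ≤ (r : ℝ) * θ := by positivity
      push_cast; linarith
    push_cast at *
    linarith
  refine h1.trans ?_
  rw [Real.exp_nat_mul]
  gcongr
  rw [Real.cosh_eq]
  have := Real.exp_pos (-θ)
  linarith

lemma walsh_core (r : ℕ) (hr : 1 ≤ r) (R : ℝ → ℝ) (hR : IsTrigPoly r R)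
    (γ φ : ℝ) (hγ : 0 < γ) (hφ : γ < φ) (hφ' : φ < Real.pi / 2)
    (hb : ∀ t ∈ Set.Icc (-(2 * γ)) (2 * γ), |R t| ≤ 1) :
    |R (2 * φ)| ≤ (2 * Real.sin φ / Real.sin γ) ^ (2 * r) := by
  have hσ : 0 < Real.sin γ := Real.sin_pos_of_pos_of_lt_pi hγ (by linarith)
  have hσ1 : Real.sin γ < Real.sin φ :=
    Real.sin_lt_sin_of_lt_of_le_pi_div_two (by linarith) hφ'.le hφ
  obtain ⟨P, hP, hPe⟩ := IsTanRep.of_trig hR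
  set f : ℝ → ℝ := fun x => 2 * (Real.sin x / Real.sin γ) ^ 2 - 1 with hfdef
  have hf : IsTanRep 1 f := by
    have h1 := ((isTanRep_one 1).const_mul ((1 / Real.sin γ) ^ 2 - 1)).add
      (isTanRep_cos_two.const_mul (-(1 / Real.sin γ) ^ 2))
    have e : f = fun x => ((1 / Real.sin γ) ^ 2 - 1) * 1 +
        (-(1 / Real.sin γ) ^ 2) * Real.cos (2 * x) := by
      funext x
      rw [Real.cos_two_mul, Real.cos_sq']
      simp only [hfdef]; ring
    rw [e]; exact h1
  obtain ⟨W, hW, hWe⟩ := isTanRep_poly r (Chebyshev.T ℝ r) (by simp [Chebyshev.natDegree_T]) f hf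
  set ψ : ℕ → ℝ := fun j => Real.arcsin (Real.sin γ * Chebyshev.node (2 * r) j) with hψ
  have hnode : ∀ j, -1 ≤ Chebyshev.node (2 * r) j ∧ Chebyshev.node (2 * r) j ≤ 1 :=
    fun j => Chebyshev.node_mem_Icc
  have hγ2 : γ ≤ Real.pi / 2 := by linarith
  have hlo : ∀ j, -γ ≤ ψ j := by
    intro j
    have : Real.arcsin (Real.sin (-γ)) = -γ := Real.arcsin_sin (by linarith) (by linarith)
    rw [← this, Real.sin_neg]
    exact Real.monotone_arcsin (by nlinarith [hnode j])
  have hhi : ∀ j, ψ j ≤ γ := by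
    intro j
    have : Real.arcsin (Real.sin γ) = γ := Real.arcsin_sin (by linarith) (by linarith)
    conv_rhs => rw [← this]
    exact Real.monotone_arcsin (by nlinarith [hnode j])
  have hsin : ∀ j, Real.sin (ψ j) = Real.sin γ * Chebyshev.node (2 * r) j := by
    intro j
    have := Real.sin_le_one γ
    exact Real.sin_arcsin (by nlinarith [hnode j]) (by nlinarith [hnode j])
  have hcos : ∀ j, 0 < Real.cos (ψ j) := fun j =>
    Real.cos_pos_of_mem_Ioo ⟨by linarith [hlo j], by linarith [hhi j]⟩
  have hcφ : 0 < Real.cos φ := Real.cos_pos_of_mem_Ioo ⟨by linarith, hφ'⟩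
  have hψanti : ∀ i j, i < j → j ≤ 2 * r → ψ j < ψ i := by
    intro i j hij hj
    have h1 := Chebyshev.node_lt hj hij
    by_contra hc
    have h2 : Real.sin (ψ i) ≤ Real.sin (ψ j) := Real.sin_le_sin_of_le_of_le_pi_div_two
      (by linarith [hlo i]) (by linarith [hhi j]) (not_lt.mp hc)
    rw [hsin, hsin] at h2
    nlinarith
  have hfψ : ∀ j ≤ 2 * r, (Chebyshev.T ℝ r).eval (f (ψ j)) = (-1) ^ j := by
    intro j hj
    have h1 := Chebyshev.eval_T_real_node (n := 2 * r) (i := j) (by simpa using hj)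
    have h2 : ((2 * r : ℕ) : ℤ) = (r : ℤ) * 2 := by push_cast; ring
    rw [h2, Chebyshev.T_mul, eval_comp, Chebyshev.T_two] at h1
    rw [← h1]
    congr 1
    simp only [hfdef, hsin]
    rw [mul_div_cancel_left₀ _ hσ.ne']
    simp
  have hcmp : |P.eval (Real.tan φ)| ≤ W.eval (Real.tan φ) := by
    refine walsh_compare (2 * r) (fun j => Real.tan (ψ j)) ?_ P W hP hW ?_ _ ?_
    · intro i j hij hj
      exact Real.tan_lt_tan_of_lt_of_lt_pi_div_two (by linarith [hlo j]) (by linarith [hhi i])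
        (hψanti i j hij hj)
    · intro j hj
      have h1 := hPe (ψ j) (hcos j).ne'
      have h2 := hWe (ψ j) (hcos j).ne'
      simp only [hfψ j hj] at h2
      have h3 := hb (2 * ψ j) ⟨by linarith [hlo j], by linarith [hhi j]⟩
      simp only at h1
      have hc : 0 < Real.cos (ψ j) ^ (2 * r) := pow_pos (hcos j) _
      have h4 : ((-1 : ℝ) ^ j) * (-1) ^ j = 1 := by rw [← mul_pow]; simp
      rw [h1, abs_mul, abs_of_pos hc] at h3
      refine le_of_mul_le_mul_left ?_ hc
      calc _ ≤ (1 : ℝ) := h3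
        _ = ((-1 : ℝ) ^ j) * (-1) ^ j := h4.symm
        _ = (-1) ^ j * (Real.cos (ψ j) ^ (2 * r) * W.eval (Real.tan (ψ j))) := by rw [← h2]
        _ = _ := by ring
    · intro j hj
      exact Real.tan_lt_tan_of_lt_of_lt_pi_div_two (by linarith [hlo j]) hφ'
        (by linarith [hhi j])
  have h1 := hPe φ hcφ.ne'
  have h2 := hWe φ hcφ.ne'
  have hc : 0 < Real.cos φ ^ (2 * r) := pow_pos hcφ _
  simp only at h1 h2
  have h5 : 1 < Real.sin φ / Real.sin γ := (one_lt_div hσ).mpr hσ1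
  have hf1 : 1 ≤ f φ := by simp only [hfdef]; nlinarith
  calc |R (2 * φ)| = Real.cos φ ^ (2 * r) * |P.eval (Real.tan φ)| := by
        rw [h1, abs_mul, abs_of_pos hc]
    _ ≤ Real.cos φ ^ (2 * r) * W.eval (Real.tan φ) := by gcongr
    _ = (Chebyshev.T ℝ r).eval (f φ) := h2.symm
    _ ≤ (2 * f φ) ^ r := chebT_le r _ hf1
    _ ≤ ((2 * Real.sin φ / Real.sin γ) ^ 2) ^ r := by
        gcongr
        simp only [hfdef, mul_div_assoc]
        nlinarith
    _ = _ := by rw [← pow_mul]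

lemma IsTrigPoly.neg {r : ℕ} {R : ℝ → ℝ} (hR : IsTrigPoly r R) :
    IsTrigPoly r (fun t => R (-t)) := by
  obtain ⟨a, b, h⟩ := hR
  refine ⟨a, fun k => -b k, fun t => ?_⟩
  simp [h]

lemma IsTrigPoly.cont {r : ℕ} {R : ℝ → ℝ} (hR : IsTrigPoly r R) : Continuous R := by
  obtain ⟨a, b, h⟩ := hR
  rw [funext h]
  fun_prop

lemma walsh_pos (r : ℕ) (hr : 1 ≤ r) (R : ℝ → ℝ) (hR : IsTrigPoly r R)
    (γ γ₁ : ℝ) (hγ : 0 < γ) (hγγ₁ : γ < γ₁) (hγ₁ : γ₁ ≤ Real.pi / 2)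
    (hb : ∀ t ∈ Set.Icc (-(2 * γ)) (2 * γ), |R t| ≤ 1) (t : ℝ) (ht : 0 ≤ t) (ht1 : t ≤ 2 * γ₁) :
    |R t| ≤ (2 * Real.sin γ₁ / Real.sin γ) ^ (2 * r) := by
  have hσ : 0 < Real.sin γ := Real.sin_pos_of_pos_of_lt_pi hγ (by linarith)
  by_cases h : t ≤ 2 * γ
  · refine (hb t ⟨by linarith, h⟩).trans (one_le_pow₀ ?_)
    rw [le_div_iff₀ hσ]
    have := Real.sin_le_sin_of_le_of_le_pi_div_two (by linarith) hγ₁ hγγ₁.le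
    linarith
  · push Not at h
    have hcl : IsClosed {t | |R t| ≤ (2 * Real.sin γ₁ / Real.sin γ) ^ (2 * r)} :=
      isClosed_le hR.cont.abs continuous_const
    have hsub : Set.Ioo (2 * γ) (2 * γ₁) ⊆
        {t | |R t| ≤ (2 * Real.sin γ₁ / Real.sin γ) ^ (2 * r)} := by
      intro s hs
      have h1 := walsh_core r hr R hR γ (s / 2) hγ (by linarith [hs.1]) (by linarith [hs.2]) hb
      rw [mul_div_cancel₀ s two_ne_zero] at h1
      refine h1.trans ?_
      have h2 := Real.sin_le_sin_of_le_of_le_pi_div_two (x := s / 2) (by linarith [hs.1]) hγ₁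
        (by linarith [hs.2])
      have h3 : 0 ≤ Real.sin (s / 2) :=
        Real.sin_nonneg_of_nonneg_of_le_pi (by linarith [hs.1]) (by linarith [hs.2])
      gcongr
    have h2 := closure_minimal hsub hcl
    rw [closure_Ioo (by linarith)] at h2
    exact h2 ⟨h.le, ht1⟩

end WalshHelpers

/-- Bernstein–Walsh type estimate for trigonometric polynomials: if `max_{[-2γ,2γ]} |R| = 1`
then `max_{[-2γ₁,2γ₁]} |R| ≤ (2 sin γ₁ / sin γ)^{2r} ≤ (π γ₁/γ)^{2r}`. -/
theorem trig_walsh (r : ℕ) (hr : 1 ≤ r) (R : ℝ → ℝ) (hR : IsTrigPoly r R)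
    (γ γ₁ : ℝ) (hγ : 0 < γ) (hγγ₁ : γ < γ₁) (hγ₁ : γ₁ ≤ Real.pi / 2)
    (hmax : IsGreatest ((fun t => |R t|) '' Set.Icc (-(2 * γ)) (2 * γ)) 1) :
    (∀ t ∈ Set.Icc (-(2 * γ₁)) (2 * γ₁),
        |R t| ≤ (2 * Real.sin γ₁ / Real.sin γ) ^ (2 * r)) ∧
      (2 * Real.sin γ₁ / Real.sin γ) ^ (2 * r) ≤ (Real.pi * γ₁ / γ) ^ (2 * r) := by
  have hb : ∀ t ∈ Set.Icc (-(2 * γ)) (2 * γ), |R t| ≤ 1 := fun t ht => hmax.2 ⟨t, ht, rfl⟩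
  have hσ : 0 < Real.sin γ := Real.sin_pos_of_pos_of_lt_pi hγ (by linarith)
  refine ⟨fun t ht => ?_, ?_⟩
  · rcases le_total 0 t with h | h
    · exact walsh_pos r hr R hR γ γ₁ hγ hγγ₁ hγ₁ hb t h ht.2
    · have := walsh_pos r hr _ hR.neg γ γ₁ hγ hγγ₁ hγ₁
        (fun s hs => hb (-s) ⟨by linarith [hs.2], by linarith [hs.1]⟩) (-t) (by linarith)
        (by linarith [ht.1])
      simpa using this
  · have h1 : Real.sin γ₁ ≤ γ₁ := Real.sin_le (by linarith)
    have h2 : 2 / Real.pi * γ ≤ Real.sin γ := Real.mul_le_sin hγ.le (by linarith)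
    have h3 : 0 < Real.sin γ₁ := Real.sin_pos_of_pos_of_lt_pi (by linarith) (by linarith)
    have hpi := Real.pi_pos
    have hle : 2 * Real.sin γ₁ / Real.sin γ ≤ Real.pi * γ₁ / γ := by
      calc _ ≤ 2 * γ₁ / (2 / Real.pi * γ) := by gcongr; linarith
        _ = _ := by field_simp
    gcongr
end
end
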